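/- arXiv:2409.14148 — 3 statements merged into one kernel-verified Lean document; each statement's English description precedes it below -/
import Mathlib

section
/- Let 𝒳, 𝒴, 𝒵, 𝒰 be finite sets, P_{XYZ} a pmf on 𝒳×𝒴×𝒵, and Q_{XYZ} a pmf satisfying Q_{YZ|X} = Q_{Z|X} Q_{Y|Z} (i.e., X → Z → Y is a Markov chain under Q). For any pmf P_{UX} on 𝒰×𝒳 whose 𝒳-marginal is P_X, extend it to P_{UXYZ} = P_{UX} P_{YZ|X}. Then ∑_u P_U(u) f(P_{X|U}(·|u)) ≤ D(P_{UYZ} ‖ P_{UZ} Q_{Y|Z}). -/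
open scoped BigOperators

noncomputable section

open Classical in
/-- Pushforward of a finitely supported mass function along a map. -/
def pushf {Ω α : Type*} [Fintype Ω] (p : Ω → ℝ) (f : Ω → α) : α → ℝ :=
  fun a => ∑ ω, if f ω = a then p ω else 0

/-- `p` is a probability mass function. -/
def IsPMF {α : Type*} [Fintype α] (p : α → ℝ) : Prop :=
  (∀ a, 0 ≤ p a) ∧ ∑ a, p a = 1

/-- Kullback–Leibler divergence `D(p‖q)` of mass functions, valued in `EReal`
(equal to `⊤` if `p` is not absolutely continuous w.r.t. `q`). -/
def klDiv {α : Type*} [Fintype α] (p q : α → ℝ) : EReal :=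
  if ∀ a, q a = 0 → p a = 0 then ((∑ a, p a * Real.log (p a / q a) : ℝ) : EReal) else ⊤

/-- Shannon entropy. -/
def entropy {α : Type*} [Fintype α] (p : α → ℝ) : ℝ :=
  -∑ a, p a * Real.log (p a)

/-- Conditional mutual information `I(A;B|C)` under the mass function `p`. -/
def condMI {Ω α β γ : Type*} [Fintype Ω] [Fintype α] [Fintype β] [Fintype γ]
    (p : Ω → ℝ) (A : Ω → α) (B : Ω → β) (C : Ω → γ) : ℝ :=
  entropy (pushf p (fun ω => (A ω, C ω))) + entropy (pushf p (fun ω => (B ω, C ω)))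
    - entropy (pushf p (fun ω => (A ω, B ω, C ω))) - entropy (pushf p C)

/-- First marginal of a joint mass function. -/
def margFst {α β : Type*} [Fintype α] [Fintype β] (p : α × β → ℝ) : α → ℝ :=
  fun a => ∑ b, p (a, b)

/-- Conditional mass function of the second coordinate given the first. -/
def condSnd {α β : Type*} [Fintype α] [Fintype β] (p : α × β → ℝ) : α → β → ℝ :=
  fun a b => p (a, b) / margFst p a

/-- Output distribution of a channel on an input distribution. -/
def outDist {α β : Type*} [Fintype α] [Fintype β] (ch : α → β → ℝ) (pa : α → ℝ) : β → ℝ :=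
  fun b => ∑ a, pa a * ch a b

/-- The difference functional
`f(P'_X) = sup_{Q̂_X ≪ Q_X} D(P'_Y‖Q̂_Y) − D(P'_Z‖Q̂_Z)`. -/
def fdiff {X Y Z : Type*} [Fintype X] [Fintype Y] [Fintype Z]
    (pYgX : X → Y → ℝ) (pZgX : X → Z → ℝ) (qYgX : X → Y → ℝ) (qZgX : X → Z → ℝ)
    (qX : X → ℝ) (pX' : X → ℝ) : EReal :=
  sSup {d : EReal | ∃ qhX : X → ℝ, IsPMF qhX ∧ (∀ x, qX x = 0 → qhX x = 0) ∧
    d = klDiv (outDist pYgX pX') (outDist qYgX qhX)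
        - klDiv (outDist pZgX pX') (outDist qZgX qhX)}

/-- The quantity `G_{P_XY, Q_XY, P_XZ, Q_XZ}(R)`: the supremum over finite sets `𝒰`
(represented by `Fin m`) and channels `P_{U|X}` with `I_P(U;X|Y) ≤ R` and `I_P(U;X|Z) ≤ R`
of `∑_u P_U(u) f(P_{X|U}(·|u))`. -/
def Gexp {X Y Z : Type*} [Fintype X] [Fintype Y] [Fintype Z]
    (pXY : X × Y → ℝ) (qXY : X × Y → ℝ) (pXZ : X × Z → ℝ) (qXZ : X × Z → ℝ)
    (R : ℝ) : EReal :=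
  sSup {v : EReal | ∃ (m : ℕ) (ch : X → Fin m → ℝ),
    (∀ x, IsPMF (ch x)) ∧
    condMI (fun w : Fin m × X × Y => ch w.2.1 w.1 * pXY (w.2.1, w.2.2))
      (fun w => w.1) (fun w => w.2.1) (fun w => w.2.2) ≤ R ∧
    condMI (fun w : Fin m × X × Z => ch w.2.1 w.1 * pXZ (w.2.1, w.2.2))
      (fun w => w.1) (fun w => w.2.1) (fun w => w.2.2) ≤ R ∧
    v = ∑ u : Fin m,
      ((∑ x, ch x u * margFst pXY x : ℝ) : EReal) *
        fdiff (condSnd pXY) (condSnd pXZ) (condSnd qXY) (condSnd qXZ)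
          (margFst qXY)
          (fun x => ch x u * margFst pXY x / ∑ x', ch x' u * margFst pXY x')}

/-- The error exponent of distributed hypothesis testing, via the Ahlswede–Csiszár
multi-letter characterization. -/
def errExp {X W : Type*} [Fintype X] [Fintype W]
    (pXW qXW : X × W → ℝ) (R : ℝ) : EReal :=
  sSup {v : EReal | ∃ n : ℕ, 0 < n ∧
    ∃ κ : (Fin n → X) → Fin (2 ^ ⌊(n : ℝ) * R⌋₊) → ℝ,
      (∀ x, IsPMF (κ x)) ∧
      v = (((n : ℝ)⁻¹ : ℝ) : EReal) *
        klDiv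
          (fun mw : Fin (2 ^ ⌊(n : ℝ) * R⌋₊) × (Fin n → W) =>
            ∑ x : Fin n → X, (∏ i, pXW (x i, mw.2 i)) * κ x mw.1)
          (fun mw : Fin (2 ^ ⌊(n : ℝ) * R⌋₊) × (Fin n → W) =>
            ∑ x : Fin n → X, (∏ i, qXW (x i, mw.2 i)) * κ x mw.1)}

/-! helper lemmas -/

theorem aux_pt (p q c : ℝ) (hp : 0 ≤ p) (hq : 0 ≤ q) (hc : 0 < c) (h : q = 0 → p = 0) :
    p * Real.log c + p - q * c ≤ p * Real.log (p / q) := by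
  rcases hp.eq_or_lt with rfl | hp
  · simp; positivity
  have hq : 0 < q := lt_of_le_of_ne hq (fun e => hp.ne' (h e.symm))
  have h1 := Real.one_sub_inv_le_log_of_pos (x := p / q / c) (by positivity)
  rw [Real.log_div (by positivity) hc.ne'] at h1
  have h2 := mul_le_mul_of_nonneg_left h1 hp.le
  have h3 : p * (1 - (p / q / c)⁻¹) = p - q * c := by field_simp
  rw [h3] at h2
  linarith

theorem aux_logsum {Z : Type*} [Fintype Z] (p q : Z → ℝ) (hp : ∀ z, 0 ≤ p z) (hq : ∀ z, 0 ≤ q z)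
    (h : ∀ z, q z = 0 → p z = 0) :
    (∑ z, p z) * Real.log ((∑ z, p z) / ∑ z, q z) ≤ ∑ z, p z * Real.log (p z / q z) := by
  have hP : 0 ≤ ∑ z, p z := Finset.sum_nonneg fun z _ => hp z
  rcases hP.eq_or_lt with h0 | hP
  · have hz : ∀ z, p z = 0 := fun z =>
      (Finset.sum_eq_zero_iff_of_nonneg (fun z _ => hp z)).1 h0.symm z (Finset.mem_univ z)
    simp [hz]
  have hQ : 0 < ∑ z, q z := by
    refine lt_of_le_of_ne (Finset.sum_nonneg fun z _ => hq z) fun e => ?_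
    have hz : ∀ z, q z = 0 := fun z =>
      (Finset.sum_eq_zero_iff_of_nonneg (fun z _ => hq z)).1 e.symm z (Finset.mem_univ z)
    have : ∑ z, p z = 0 := Finset.sum_eq_zero fun z _ => h z (hz z)
    linarith
  set c := (∑ z, p z) / ∑ z, q z with hcdef
  have hc : 0 < c := by positivity
  have := Finset.sum_le_sum fun z (_ : z ∈ Finset.univ) => aux_pt (p z) (q z) c (hp z) (hq z) hc (h z)
  rw [Finset.sum_sub_distrib, Finset.sum_add_distrib, ← Finset.sum_mul, ← Finset.sum_mul] at this
  have h3 : (∑ z, q z) * c = ∑ z, p z := by rw [hcdef]; field_simp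
  linarith

theorem aux_core {Y Z : Type*} [Fintype Y] [Fintype Z] (r : Y → Z → ℝ) (qz : Z → ℝ)
    (W : Z → Y → ℝ) (hr : ∀ y z, 0 ≤ r y z) (hqz : ∀ z, 0 ≤ qz z) (hW : ∀ z y, 0 ≤ W z y)
    (hac : ∀ y z, (∑ y', r y' z) * W z y = 0 → r y z = 0) :
    klDiv (fun y => ∑ z, r y z) (fun y => ∑ z, qz z * W z y)
      - klDiv (fun z => ∑ y, r y z) qz
      ≤ ((∑ y, ∑ z, r y z * Real.log (r y z / ((∑ y', r y' z) * W z y)) : ℝ) : EReal) := by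
  by_cases h1 : ∀ z, qz z = 0 → ∑ y, r y z = 0
  swap
  · have : klDiv (fun z => ∑ y, r y z) qz = ⊤ := by unfold klDiv; rw [if_neg h1]
    rw [this, EReal.sub_top]; exact bot_le
  have hr0 : ∀ z, ∑ y, r y z = 0 → ∀ y, r y z = 0 := fun z hz y =>
    (Finset.sum_eq_zero_iff_of_nonneg (fun y _ => hr y z)).1 hz y (Finset.mem_univ y)
  have hac2 : ∀ y z, qz z * W z y = 0 → r y z = 0 := by
    intro y z h
    rcases mul_eq_zero.1 h with h | h
    · exact hr0 z (h1 z h) y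
    · exact hac y z (by rw [h, mul_zero])
  have h2 : ∀ y, ∑ z, qz z * W z y = 0 → ∑ z, r y z = 0 := by
    intro y h
    refine Finset.sum_eq_zero fun z _ => hac2 y z ?_
    exact (Finset.sum_eq_zero_iff_of_nonneg
      (fun z _ => mul_nonneg (hqz z) (hW z y))).1 h z (Finset.mem_univ z)
  unfold klDiv
  rw [if_pos h1, if_pos h2, ← EReal.coe_sub, EReal.coe_le_coe_iff]
  have h3 : ∑ y, (∑ z, r y z) * Real.log ((∑ z, r y z) / ∑ z, qz z * W z y)
      ≤ ∑ y, ∑ z, r y z * Real.log (r y z / (qz z * W z y)) :=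
    Finset.sum_le_sum fun y _ => aux_logsum (fun z => r y z) (fun z => qz z * W z y)
      (hr y) (fun z => mul_nonneg (hqz z) (hW z y)) (hac2 y)
  have h4 : ∑ y, ∑ z, r y z * Real.log (r y z / (qz z * W z y))
      = ∑ y, ∑ z, r y z * Real.log (r y z / ((∑ y', r y' z) * W z y))
        + ∑ z, (∑ y, r y z) * Real.log ((∑ y, r y z) / qz z) := by
    have h5 : ∑ z, (∑ y, r y z) * Real.log ((∑ y, r y z) / qz z)
        = ∑ z, ∑ y, r y z * Real.log ((∑ y, r y z) / qz z) :=
      Finset.sum_congr rfl fun z _ => Finset.sum_mul _ _ _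
    rw [h5]
    rw [Finset.sum_comm (f := fun z y => r y z * Real.log ((∑ y, r y z) / qz z)),
      ← Finset.sum_add_distrib]
    refine Finset.sum_congr rfl fun y _ => ?_
    rw [← Finset.sum_add_distrib]
    refine Finset.sum_congr rfl fun z _ => ?_
    rcases eq_or_ne (r y z) 0 with h | h
    · simp [h]
    have a1 : qz z * W z y ≠ 0 := fun e => h (hac2 y z e)
    have a2 : (∑ y', r y' z) * W z y ≠ 0 := fun e => h (hac y z e)
    have a3 := left_ne_zero_of_mul a1
    have a4 := right_ne_zero_of_mul a1
    have a5 := left_ne_zero_of_mul a2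
    rw [Real.log_div h a1, Real.log_div h a2, Real.log_div a5 a3, Real.log_mul a3 a4,
      Real.log_mul a5 a4]
    ring
  linarith

theorem aux_push_xy {X Y Z : Type*} [Fintype X] [Fintype Y] [Fintype Z] (P : X × Y × Z → ℝ)
    (x : X) (y : Y) : pushf P (fun w => (w.1, w.2.1)) (x, y) = ∑ z, P (x, y, z) := by
  classical
  simp [pushf, Fintype.sum_prod_type, Prod.mk.injEq, ite_and, Finset.sum_ite_irrel]
  rw [Finset.sum_comm]; simp

theorem aux_push_xz {X Y Z : Type*} [Fintype X] [Fintype Y] [Fintype Z] (P : X × Y × Z → ℝ)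
    (x : X) (z : Z) : pushf P (fun w => (w.1, w.2.2)) (x, z) = ∑ y, P (x, y, z) := by
  classical
  simp [pushf, Fintype.sum_prod_type, Prod.mk.injEq, ite_and, Finset.sum_ite_irrel]

theorem aux_push_zy {X Y Z : Type*} [Fintype X] [Fintype Y] [Fintype Z] (P : X × Y × Z → ℝ)
    (y : Y) (z : Z) : pushf P (fun w => (w.2.2, w.2.1)) (z, y) = ∑ x, P (x, y, z) := by
  classical
  simp [pushf, Fintype.sum_prod_type, Prod.mk.injEq, ite_and, Finset.sum_ite_irrel]

theorem aux_push_yz {X Y Z : Type*} [Fintype X] [Fintype Y] [Fintype Z] (P : X × Y × Z → ℝ)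
    (y : Y) (z : Z) : pushf P (fun w => (w.2.1, w.2.2)) (y, z) = ∑ x, P (x, y, z) := by
  classical
  simp [pushf, Fintype.sum_prod_type, Prod.mk.injEq, ite_and, Finset.sum_ite_irrel]

theorem aux_push_x {X Y Z : Type*} [Fintype X] [Fintype Y] [Fintype Z] (P : X × Y × Z → ℝ)
    (x : X) : pushf P (fun w => w.1) x = ∑ y, ∑ z, P (x, y, z) := by
  classical
  simp [pushf, Fintype.sum_prod_type, Finset.sum_ite_irrel]
  rw [Finset.sum_eq_single x] <;> simp +contextual

theorem aux_push_z {X Y Z : Type*} [Fintype X] [Fintype Y] [Fintype Z] (P : X × Y × Z → ℝ)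
    (z : Z) : pushf P (fun w => w.2.2) z = ∑ x, ∑ y, P (x, y, z) := by
  classical
  simp [pushf, Fintype.sum_prod_type, Finset.sum_ite_irrel]

theorem aux_outY {X Y Z : Type*} [Fintype X] [Fintype Y] [Fintype Z] (P : X × Y × Z → ℝ)
    (p : X → ℝ) (s : ℝ) :
    outDist (condSnd (pushf P (fun w => (w.1, w.2.1)))) (fun x => p x / s)
      = fun y => ∑ z, (∑ x, p x * (P (x, y, z) / pushf P (fun v => v.1) x)) / s := by
  funext y
  simp only [outDist, condSnd, margFst, aux_push_xy, aux_push_x]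
  simp_rw [Finset.sum_div]
  rw [Finset.sum_comm]
  refine Finset.sum_congr rfl fun x _ => ?_
  rw [Finset.mul_sum]
  refine Finset.sum_congr rfl fun z _ => ?_
  ring

theorem aux_outZ {X Y Z : Type*} [Fintype X] [Fintype Y] [Fintype Z] (P : X × Y × Z → ℝ)
    (p : X → ℝ) (s : ℝ) :
    outDist (condSnd (pushf P (fun w => (w.1, w.2.2)))) (fun x => p x / s)
      = fun z => ∑ y, (∑ x, p x * (P (x, y, z) / pushf P (fun v => v.1) x)) / s := by
  funext z
  simp only [outDist, condSnd, margFst, aux_push_xz, aux_push_x]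
  simp_rw [Finset.sum_div]
  rw [Finset.sum_comm]
  refine Finset.sum_congr rfl fun x _ => ?_
  rw [Finset.mul_sum]
  refine Finset.sum_congr rfl fun y _ => ?_
  rw [Finset.sum_comm]
  ring

theorem aux_markov {X Y Z : Type*} [Fintype X] [Fintype Y] [Fintype Z] (Q : X × Y × Z → ℝ)
    (hQ : ∀ w, 0 ≤ Q w)
    (hMarkov : ∀ x y z, Q (x, y, z) * pushf Q (fun w => w.2.2) z
      = pushf Q (fun w => (w.1, w.2.2)) (x, z) * pushf Q (fun w => (w.2.1, w.2.2)) (y, z))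
    (x : X) (y : Y) (z : Z) :
    Q (x, y, z) = (∑ y', Q (x, y', z)) * condSnd (pushf Q (fun v => (v.2.2, v.2.1))) z y := by
  have h := hMarkov x y z
  rw [aux_push_z, aux_push_xz, aux_push_yz] at h
  simp only [condSnd, margFst, aux_push_zy]
  rw [Finset.sum_comm] at h
  rcases eq_or_ne (∑ y', ∑ x', Q (x', y', z)) 0 with h0 | h0
  · have h1 := (Finset.sum_eq_zero_iff_of_nonneg
      (fun y _ => Finset.sum_nonneg fun x _ => hQ (x, y, z))).1 h0 y (Finset.mem_univ y)
    have h2 := (Finset.sum_eq_zero_iff_of_nonneg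
      (fun x _ => hQ (x, y, z))).1 h1 x (Finset.mem_univ x)
    rw [h0, h2]; simp
  · rw [← mul_div_assoc, ← h]; field_simp

theorem aux_outQ {X Y Z : Type*} [Fintype X] [Fintype Y] [Fintype Z] (Q : X × Y × Z → ℝ)
    (hQ : ∀ w, 0 ≤ Q w)
    (hMarkov : ∀ x y z, Q (x, y, z) * pushf Q (fun w => w.2.2) z
      = pushf Q (fun w => (w.1, w.2.2)) (x, z) * pushf Q (fun w => (w.2.1, w.2.2)) (y, z))
    (qh : X → ℝ) :
    outDist (condSnd (pushf Q (fun w => (w.1, w.2.1)))) qh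
      = fun y => ∑ z, outDist (condSnd (pushf Q (fun w => (w.1, w.2.2)))) qh z *
          condSnd (pushf Q (fun v => (v.2.2, v.2.1))) z y := by
  funext y
  have hm := aux_markov Q hQ hMarkov
  set W := condSnd (pushf Q (fun v => (v.2.2, v.2.1)))
  simp only [outDist, condSnd, margFst, aux_push_xy, aux_push_xz]
  simp_rw [Finset.sum_mul]
  rw [Finset.sum_comm]
  refine Finset.sum_congr rfl fun x _ => ?_
  rw [Finset.sum_div, Finset.mul_sum]
  refine Finset.sum_congr rfl fun z _ => ?_
  rw [Finset.sum_comm (f := fun z y => Q (x, y, z)), hm x y z]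
  ring

theorem aux_coe_sum {ι : Type*} (s : Finset ι) (f : ι → ℝ) :
    ((∑ i ∈ s, f i : ℝ) : EReal) = ∑ i ∈ s, (f i : EReal) :=
  map_sum (⟨⟨Real.toEReal, EReal.coe_zero⟩, EReal.coe_add⟩ : ℝ →+ EReal) f s

/-- If `X → Z → Y` is a Markov chain under `Q`, then for any `P_UX` with
`X`-marginal `P_X`, `∑_u P_U(u) f(P_{X|U}(·|u)) ≤ D(P_{UYZ} ‖ P_{UZ} Q_{Y|Z})`. -/
theorem fdiff_le_klDiv_aux_receiver {X Y Z U : Type*}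
    [Fintype X] [Fintype Y] [Fintype Z] [Fintype U]
    (P Q : X × Y × Z → ℝ) (hP : IsPMF P) (hQ : IsPMF Q)
    (hMarkov : ∀ x y z, Q (x, y, z) * pushf Q (fun w => w.2.2) z
      = pushf Q (fun w => (w.1, w.2.2)) (x, z) * pushf Q (fun w => (w.2.1, w.2.2)) (y, z))
    (pUX : U × X → ℝ) (hpUX : IsPMF pUX)
    (hmarg : ∀ x, ∑ u, pUX (u, x) = pushf P (fun w => w.1) x) :
    (∑ u, ((∑ x, pUX (u, x) : ℝ) : EReal) *
        fdiff (condSnd (pushf P (fun w => (w.1, w.2.1))))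
          (condSnd (pushf P (fun w => (w.1, w.2.2))))
          (condSnd (pushf Q (fun w => (w.1, w.2.1))))
          (condSnd (pushf Q (fun w => (w.1, w.2.2))))
          (pushf Q (fun w => w.1))
          (fun x => pUX (u, x) / ∑ x', pUX (u, x')))
      ≤ klDiv
          (fun w : U × Y × Z =>
            ∑ x, pUX (w.1, x) * (P (x, w.2.1, w.2.2) / pushf P (fun v => v.1) x))
          (fun w : U × Y × Z =>
            (∑ x, ∑ y, pUX (w.1, x) * (P (x, y, w.2.2) / pushf P (fun v => v.1) x)) *
              condSnd (pushf Q (fun v => (v.2.2, v.2.1))) w.2.2 w.2.1) := by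
  set W := condSnd (pushf Q (fun v => (v.2.2, v.2.1))) with hWdef
  have hW : ∀ z y, 0 ≤ W z y := by
    intro z y
    simp only [hWdef, condSnd, margFst, aux_push_zy]
    exact div_nonneg (Finset.sum_nonneg fun x _ => hQ.1 _)
      (Finset.sum_nonneg fun y _ => Finset.sum_nonneg fun x _ => hQ.1 _)
  have hpx : ∀ x, 0 ≤ pushf P (fun v => v.1) x := by
    intro x
    rw [aux_push_x]
    exact Finset.sum_nonneg fun y _ => Finset.sum_nonneg fun x _ => hP.1 _
  set a : U → Y → Z → ℝ := fun u y z =>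
    ∑ x, pUX (u, x) * (P (x, y, z) / pushf P (fun v => v.1) x) with hadef
  have ha : ∀ u y z, 0 ≤ a u y z := fun u y z =>
    Finset.sum_nonneg fun x _ => mul_nonneg (hpUX.1 _) (div_nonneg (hP.1 _) (hpx x))
  have hR : (fun w : U × Y × Z =>
      (∑ x, ∑ y, pUX (w.1, x) * (P (x, y, w.2.2) / pushf P (fun v => v.1) x)) *
        W w.2.2 w.2.1) = fun w : U × Y × Z => (∑ y, a w.1 y w.2.2) * W w.2.2 w.2.1 := by
    funext w
    rw [Finset.sum_comm]
  have hL : (fun w : U × Y × Z =>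
      ∑ x, pUX (w.1, x) * (P (x, w.2.1, w.2.2) / pushf P (fun v => v.1) x))
      = fun w : U × Y × Z => a w.1 w.2.1 w.2.2 := rfl
  rw [hR, hL]
  by_cases hac : ∀ w : U × Y × Z, (∑ y, a w.1 y w.2.2) * W w.2.2 w.2.1 = 0 →
      a w.1 w.2.1 w.2.2 = 0
  swap
  · have : klDiv (fun w : U × Y × Z => a w.1 w.2.1 w.2.2)
        (fun w : U × Y × Z => (∑ y, a w.1 y w.2.2) * W w.2.2 w.2.1) = ⊤ := by
      unfold klDiv; rw [if_neg hac]
    rw [this]; exact le_top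
  have hK : klDiv (fun w : U × Y × Z => a w.1 w.2.1 w.2.2)
        (fun w : U × Y × Z => (∑ y, a w.1 y w.2.2) * W w.2.2 w.2.1)
      = ∑ u, ((∑ y, ∑ z, a u y z * Real.log (a u y z / ((∑ y', a u y' z) * W z y)) : ℝ) :
          EReal) := by
    unfold klDiv
    rw [if_pos hac, Fintype.sum_prod_type, aux_coe_sum]
    refine Finset.sum_congr rfl fun u _ => ?_
    rw [Fintype.sum_prod_type]
  rw [hK]
  refine Finset.sum_le_sum fun u _ => ?_
  have hs0 : 0 ≤ ∑ x, pUX (u, x) := Finset.sum_nonneg fun x _ => hpUX.1 _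
  rcases hs0.eq_or_lt with h0 | hs
  · have hp0 : ∀ x, pUX (u, x) = 0 := fun x =>
      (Finset.sum_eq_zero_iff_of_nonneg (fun x _ => hpUX.1 (u, x))).1 h0.symm x (Finset.mem_univ x)
    have ha0 : ∀ y z, a u y z = 0 := fun y z => by simp [hadef, hp0]
    rw [← h0]
    simp [ha0]
  set s := ∑ x, pUX (u, x) with hsdef
  have hsum : ∀ z, ∑ y, a u y z / s = (∑ y, a u y z) / s := fun z => (Finset.sum_div _ _ _).symm
  have key : fdiff (condSnd (pushf P (fun w => (w.1, w.2.1))))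
          (condSnd (pushf P (fun w => (w.1, w.2.2))))
          (condSnd (pushf Q (fun w => (w.1, w.2.1))))
          (condSnd (pushf Q (fun w => (w.1, w.2.2))))
          (pushf Q (fun w => w.1))
          (fun x => pUX (u, x) / s)
      ≤ ((∑ y, ∑ z, (a u y z / s) *
          Real.log ((a u y z / s) / ((∑ y', a u y' z / s) * W z y)) : ℝ) : EReal) := by
    refine sSup_le ?_
    rintro d ⟨qh, hqh, -, rfl⟩
    rw [aux_outY P (fun x => pUX (u, x)) s, aux_outZ P (fun x => pUX (u, x)) s,
      aux_outQ Q hQ.1 hMarkov qh]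
    refine aux_core (fun y z => a u y z / s) _ W (fun y z => div_nonneg (ha u y z) hs.le) ?_ hW ?_
    · intro z
      refine Finset.sum_nonneg fun x _ => mul_nonneg (hqh.1 x) ?_
      simp only [condSnd, margFst, aux_push_xz]
      exact div_nonneg (Finset.sum_nonneg fun y _ => hQ.1 _)
        (Finset.sum_nonneg fun y _ => Finset.sum_nonneg fun x _ => hQ.1 _)
    · intro y z h
      have h' : (∑ y, a u y z) * W z y = 0 := by
        rw [hsum z, div_mul_eq_mul_div, div_eq_zero_iff] at h
        exact h.resolve_right hs.ne'
      have := hac (u, y, z) h'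
      simp only at this
      simp [this]
  refine (mul_le_mul_of_nonneg_left key (EReal.coe_nonneg.2 hs.le)).trans (le_of_eq ?_)
  rw [← EReal.coe_mul, EReal.coe_eq_coe_iff, Finset.mul_sum]
  refine Finset.sum_congr rfl fun y _ => ?_
  rw [Finset.mul_sum]
  refine Finset.sum_congr rfl fun z _ => ?_
  have e : a u y z / s / ((∑ y', a u y' z) / s * W z y)
      = a u y z / ((∑ y', a u y' z) * W z y) := by
    rw [div_mul_eq_mul_div, div_div_div_cancel_right₀ hs.ne']
  rw [hsum z, e, ← mul_assoc, mul_div_cancel₀ _ hs.ne']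

end
end

section
/- Let 𝒰, 𝒴, 𝒵 be finite sets and let P_{UYZ}, Q_{UYZ} be pmfs such that Q_{UYZ}(u,y,z) = Q_{UZ}(u,z) Q_{Y|Z}(y|z) for all (u,y,z), P_{UZ} = Q_{UZ}, and D(P_{UYZ}‖Q_{UYZ}) < ∞. Then D(P_{UYZ} ‖ Q_{UYZ}) = D(P_{YZ} ‖ Q_{YZ}) + I_P(Y;U|Z). -/
open scoped BigOperators

noncomputable section

theorem aux_sum {Ω α : Type*} [Fintype Ω] [Fintype α] (p : Ω → ℝ) (f : Ω → α) (g : α → ℝ) :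
    ∑ a, pushf p f a * g a = ∑ ω, p ω * g (f ω) := by
  classical
  simp only [pushf, Finset.sum_mul]
  rw [Finset.sum_comm]
  refine Finset.sum_congr rfl fun ω _ => ?_
  rw [Finset.sum_eq_single (f ω)]
  · simp
  · intro b _ hb
    simp [hb.symm]
  · simp

theorem aux_comp {Ω α β : Type*} [Fintype Ω] [Fintype α] (p : Ω → ℝ) (f : Ω → α) (g : α → β) :
    pushf (pushf p f) g = pushf p (fun ω => g (f ω)) := by
  classical
  funext b
  have := aux_sum p f (fun a => if g a = b then 1 else 0)
  simp only [mul_ite, mul_one, mul_zero] at this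
  simp only [pushf] at this ⊢
  convert this using 1

theorem aux_inj {Ω α : Type*} [Fintype Ω] (p : Ω → ℝ) (f : Ω → α)
    (hf : Function.Injective f) (ω : Ω) : pushf p f (f ω) = p ω := by
  classical
  simp [pushf, hf.eq_iff]

theorem aux_le {Ω α : Type*} [Fintype Ω] (p : Ω → ℝ) (hp : ∀ ω, 0 ≤ p ω) (f : Ω → α)
    (ω : Ω) : p ω ≤ pushf p f (f ω) := by
  classical
  have := Finset.single_le_sum (f := fun x => if f x = f ω then p x else 0)
    (fun i _ => by split_ifs <;> simp [hp]) (Finset.mem_univ ω)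
  simp only [if_true] at this
  simp only [pushf]
  convert this

theorem aux_marg {α β : Type*} [Fintype α] [Fintype β] (p : α × β → ℝ) (a : α) :
    margFst p a = pushf p Prod.fst a := by
  classical
  simp only [margFst, pushf, Fintype.sum_prod_type]
  rw [Finset.sum_eq_single a]
  · simp
  · intro b _ hb
    simp [hb]
  · simp

theorem aux_abs {Ω α : Type*} [Fintype Ω] (p q : Ω → ℝ) (hq : ∀ ω, 0 ≤ q ω)
    (f : Ω → α) (h : ∀ ω, q ω = 0 → p ω = 0) (a : α) (ha : pushf q f a = 0) :
    pushf p f a = 0 := by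
  classical
  simp only [pushf]
  refine Finset.sum_eq_zero fun ω _ => ?_
  split_ifs with hw
  · subst hw
    exact h ω (le_antisymm (ha ▸ aux_le q hq f ω) (hq ω))
  · rfl

theorem aux_ent {Ω α : Type*} [Fintype Ω] [Fintype α] (p : Ω → ℝ) (f : Ω → α) :
    entropy (pushf p f) = -∑ ω, p ω * Real.log (pushf p f (f ω)) := by
  rw [entropy, aux_sum p f (fun a => Real.log (pushf p f a))]

/-- If `Q_{UYZ} = Q_{UZ} Q_{Y|Z}`, `P_UZ = Q_UZ` and `D(P_UYZ‖Q_UYZ) < ∞`, then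
`D(P_UYZ ‖ Q_UYZ) = D(P_YZ ‖ Q_YZ) + I_P(Y;U|Z)`. -/
theorem klDiv_eq_klDiv_add_condMI {U Y Z : Type*} [Fintype U] [Fintype Y] [Fintype Z]
    (P Q : U × Y × Z → ℝ) (hP : IsPMF P) (hQ : IsPMF Q)
    (hQfact : ∀ u y z, Q (u, y, z)
      = pushf Q (fun w => (w.1, w.2.2)) (u, z) *
          condSnd (pushf Q (fun w => (w.2.2, w.2.1))) z y)
    (hPQUZ : pushf P (fun w => (w.1, w.2.2)) = pushf Q (fun w => (w.1, w.2.2)))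
    (hfin : klDiv P Q < ⊤) :
    klDiv P Q
      = klDiv (pushf P (fun w => w.2)) (pushf Q (fun w => w.2))
        + ((condMI P (fun w => w.2.1) (fun w => w.1) (fun w => w.2.2) : ℝ) : EReal) := by
  have habs : ∀ a, Q a = 0 → P a = 0 := by
    by_contra hc
    rw [klDiv, if_neg hc] at hfin
    exact lt_irrefl _ hfin
  rw [klDiv, klDiv, if_pos habs, if_pos (aux_abs P Q hQ.1 _ habs), ← EReal.coe_add]
  congr 1
  rw [aux_sum P (fun w => w.2) (fun a => Real.log (pushf P (fun w => w.2) a /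
    pushf Q (fun w => w.2) a)), condMI, aux_ent, aux_ent, aux_ent, aux_ent]
  simp only [sub_eq_add_neg, neg_neg, ← Finset.sum_neg_distrib, ← Finset.sum_add_distrib]
  refine Finset.sum_congr rfl fun w _ => ?_
  obtain ⟨u, y, z⟩ := w
  by_cases hw : P (u, y, z) = 0
  · simp [hw]
  have hPw : 0 < P (u, y, z) := lt_of_le_of_ne (hP.1 _) (Ne.symm hw)
  have hQw : 0 < Q (u, y, z) := lt_of_le_of_ne (hQ.1 _) (fun h => hw (habs _ h.symm))
  have e1 : pushf P (fun w : U × Y × Z => (w.2.1, w.1, w.2.2)) (y, u, z) = P (u, y, z) :=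
    aux_inj P (fun w : U × Y × Z => (w.2.1, w.1, w.2.2))
      (by rintro ⟨a, b, c⟩ ⟨a', b', c'⟩ h; simp at h ⊢; tauto) (u, y, z)
  have e2 : pushf P (fun w : U × Y × Z => (w.2.1, w.2.2)) (y, z)
      = pushf P (fun w : U × Y × Z => w.2) (y, z) := rfl
  have e3 : pushf Q (fun w : U × Y × Z => (w.2.2, w.2.1)) (z, y)
      = pushf Q (fun w : U × Y × Z => w.2) (y, z) := by
    refine (congrFun (aux_comp Q (fun w : U × Y × Z => w.2) Prod.swap) (z, y)).symm.trans ?_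
    exact aux_inj _ Prod.swap Prod.swap_injective (y, z)
  have e4 : margFst (pushf Q (fun w : U × Y × Z => (w.2.2, w.2.1))) z
      = pushf P (fun w : U × Y × Z => w.2.2) z := by
    rw [aux_marg, aux_comp]
    have h1 := aux_comp P (fun w : U × Y × Z => (w.1, w.2.2)) Prod.snd
    have h2 := aux_comp Q (fun w : U × Y × Z => (w.1, w.2.2)) Prod.snd
    rw [hPQUZ, h2] at h1
    exact congrFun h1 z
  have p1 := hPw.trans_le (aux_le P hP.1 (fun w : U × Y × Z => (w.1, w.2.2)) (u, y, z))
  have p2 := hPw.trans_le (aux_le P hP.1 (fun w : U × Y × Z => w.2) (u, y, z))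
  have p3 := hPw.trans_le (aux_le P hP.1 (fun w : U × Y × Z => w.2.2) (u, y, z))
  have p4 := hQw.trans_le (aux_le Q hQ.1 (fun w : U × Y × Z => w.2) (u, y, z))
  have hf := hQfact u y z
  rw [condSnd, e3, e4, ← hPQUZ] at hf
  dsimp only at p1 p2 p3 p4 ⊢
  rw [e1, e2, hf, Real.log_div hPw.ne' (mul_pos p1 (div_pos p4 p3)).ne',
    Real.log_mul p1.ne' (div_pos p4 p3).ne', Real.log_div p4.ne' p3.ne',
    Real.log_div p2.ne' p4.ne']
  ring

end
end

section
/- Let 𝒳, 𝒥, 𝒵, 𝒴̂ be finite sets and set Y = (J, Z, Ŷ). Let P_{X J Z Ŷ} and Q_{X J Z Ŷ} be pmfs satisfying I_Q(Ŷ; (X,J) | Z) = 0, P_{XJZ} = Q_{XJZ}, P_{ŶZ} = Q_{ŶZ}, and D(P_{XY}‖Q_{XY}) < ∞. Then for every R > 0, E_{P_{XY},Q_{XY}}(R) ≤ sup over finite 𝒰 and channels P_{U|X} with I_P(U; X | (Z,J)) ≤ R of I_P(Ŷ; (U,J) | Z). -/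
open scoped BigOperators

noncomputable section

open Real in
def eta {α : Type*} [Fintype α] (F : α → ℝ) : ℝ :=
  ∑ a, negMulLog (F a) - negMulLog (∑ a, F a)

def hfun {X C : Type*} [Fintype X] [Fintype C] (s : X → C → ℝ) (f : X → ℝ) : ℝ :=
  ∑ c, eta (fun x => f x * s x c)

def gfun {X C Y : Type*} [Fintype X] [Fintype C] [Fintype Y] (p : X → C → Y → ℝ)
    (f : X → ℝ) : ℝ :=
  ∑ c, eta (fun y => ∑ x, f x * p x c y)

def sN {X C : Type*} (s : X → C → ℝ) (n : ℕ) (x : Fin n → X) (c : Fin n → C) : ℝ :=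
  ∏ i, s (x i) (c i)

def pN {X C Y : Type*} (p : X → C → Y → ℝ) (n : ℕ) (x : Fin n → X) (c : Fin n → C)
    (y : Fin n → Y) : ℝ :=
  ∏ i, p (x i) (c i) (y i)

lemma sum_cons {X : Type*} [Fintype X] {n : ℕ} (F : (Fin (n+1) → X) → ℝ) :
    ∑ x, F x = ∑ a, ∑ t : Fin n → X, F (Fin.cons a t) := by
  rw [← (Fin.consEquiv (fun _ : Fin (n+1) => X)).sum_comp, Fintype.sum_prod_type]
  rfl

lemma eta_chain {A B : Type*} [Fintype A] [Fintype B] (F : A → B → ℝ) :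
    eta (fun q : A × B => F q.1 q.2)
      = eta (fun a => ∑ b, F a b) + ∑ a, eta (fun b => F a b) := by
  simp only [eta, Fintype.sum_prod_type, Finset.sum_sub_distrib]
  ring

lemma eta_cons {X : Type*} [Fintype X] {n : ℕ} (F : (Fin (n+1) → X) → ℝ) :
    eta F = eta (fun a => ∑ t : Fin n → X, F (Fin.cons a t))
      + ∑ a, eta (fun t : Fin n → X => F (Fin.cons a t)) := by
  simp only [eta, sum_cons, Finset.sum_sub_distrib]
  ring

lemma eta_smul {A : Type*} [Fintype A] (k : ℝ) (F : A → ℝ) :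
    eta (fun a => k * F a) = k * eta F := by
  simp only [eta, Real.negMulLog_mul, ← Finset.mul_sum, Finset.sum_add_distrib,
    ← Finset.sum_mul]
  ring

/-- log-sum inequality -/
lemma logsum {I : Type*} [Fintype I] (a A : I → ℝ) (h0 : ∀ i, 0 ≤ a i) (h1 : ∀ i, a i ≤ A i) :
    ∑ i, (Real.negMulLog (a i) + a i * Real.log (A i))
      ≤ Real.negMulLog (∑ i, a i) + (∑ i, a i) * Real.log (∑ i, A i) := by
  set s := ∑ i, a i with hs
  set S := ∑ i, A i with hS
  have hs0 : 0 ≤ s := Finset.sum_nonneg fun i _ => h0 i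
  have hsS : s ≤ S := Finset.sum_le_sum fun i _ => h1 i
  rcases hs0.eq_or_lt with h | h
  · have : ∀ i, a i = 0 := by
      intro i
      have := (Finset.sum_eq_zero_iff_of_nonneg (fun i _ => h0 i)).1 (hs.symm.trans h.symm)
      exact this i (Finset.mem_univ _)
    simp [this, ← h]
  have hSp : 0 < S := h.trans_le hsS
  have key : ∀ i, Real.negMulLog (a i) + a i * Real.log (A i)
      - a i * (Real.log S - Real.log s) ≤ A i * (s / S) - a i := by
    intro i
    rcases (h0 i).eq_or_lt with hi | hi
    · simp only [← hi, Real.negMulLog_zero, zero_mul]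
      have : 0 ≤ A i := (h0 i).trans (h1 i)
      have : 0 ≤ A i * (s / S) := by positivity
      linarith
    have hAi : 0 < A i := hi.trans_le (h1 i)
    have hl := Real.log_le_sub_one_of_pos (show 0 < A i * s / (a i * S) by positivity)
    rw [Real.log_div (by positivity) (by positivity), Real.log_mul hAi.ne' h.ne',
      Real.log_mul hi.ne' hSp.ne'] at hl
    have := mul_le_mul_of_nonneg_left hl hi.le
    have e : a i * (A i * s / (a i * S) - 1) = A i * (s / S) - a i := by
      field_simp
    rw [e] at this
    simp only [Real.negMulLog]
    nlinarith
  have := Finset.sum_le_sum fun i (_ : i ∈ Finset.univ) => key i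
  rw [Finset.sum_sub_distrib, Finset.sum_sub_distrib, ← Finset.sum_mul, ← Finset.sum_mul,
    ← hs, ← hS, mul_div_cancel₀ _ hSp.ne'] at this
  simp only [Real.negMulLog] at this ⊢
  linarith

lemma eta_eq {A : Type*} [Fintype A] (F : A → ℝ) :
    eta F = ∑ a, (Real.negMulLog (F a) + F a * Real.log (∑ b, F b)) := by
  rw [Finset.sum_add_distrib, ← Finset.sum_mul, eta]
  simp only [Real.negMulLog]; ring

lemma eta_super {I A : Type*} [Fintype I] [Fintype A] (F : I → A → ℝ) (h : ∀ i a, 0 ≤ F i a) :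
    ∑ i, eta (F i) ≤ eta (fun a => ∑ i, F i a) := by
  simp only [eta_eq]
  rw [Finset.sum_comm]
  refine Finset.sum_le_sum fun a _ => ?_
  have := logsum (fun i => F i a) (fun i => ∑ b, F i b) (fun i => h i a)
    (fun i => Finset.single_le_sum (f := F i) (fun b _ => h i b) (Finset.mem_univ a))
  rwa [Finset.sum_comm (f := fun i b => F i b)] at this

lemma eta_nonneg {A : Type*} [Fintype A] (F : A → ℝ) (h : ∀ a, 0 ≤ F a) : 0 ≤ eta F := by
  rw [eta_eq]
  refine Finset.sum_nonneg fun a _ => ?_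
  rcases (h a).eq_or_lt with hi | hi
  · simp [← hi]
  have := Real.log_le_log hi (Finset.single_le_sum (f := F) (fun b _ => h b) (Finset.mem_univ a))
  simp only [Real.negMulLog]
  nlinarith

lemma eta_le_card {A : Type*} [Fintype A] (F : A → ℝ) (h : ∀ a, 0 ≤ F a) :
    eta F ≤ (∑ a, F a) * Real.log (Fintype.card A) := by
  rcases (Finset.sum_nonneg fun a (_ : a ∈ Finset.univ) => h a).eq_or_lt with h0 | h0
  · have : ∀ i, F i = 0 := by
      intro i
      exact (Finset.sum_eq_zero_iff_of_nonneg (fun i _ => h i)).1 h0.symm i (Finset.mem_univ _)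
    simp [eta, this]
  have hc : (Fintype.card A : ℝ) ≠ 0 := by
    intro hc
    have : IsEmpty A := Fintype.card_eq_zero_iff.1 (by exact_mod_cast hc)
    simp at h0
  rw [eta_eq]
  refine (logsum F (fun _ => ∑ b, F b) h
    (fun i => Finset.single_le_sum (f := F) (fun b _ => h b) (Finset.mem_univ i))).trans ?_
  rw [Finset.sum_const, Finset.card_univ, nsmul_eq_mul, Real.log_mul hc h0.ne']
  simp only [Real.negMulLog]
  apply le_of_eq; ring

lemma hfun_smul {X C : Type*} [Fintype X] [Fintype C] (s : X → C → ℝ) (k : ℝ) (f : X → ℝ) :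
    hfun s (fun x => k * f x) = k * hfun s f := by
  simp only [hfun, mul_assoc, eta_smul, Finset.mul_sum]

lemma gfun_smul {X C Y : Type*} [Fintype X] [Fintype C] [Fintype Y] (p : X → C → Y → ℝ)
    (k : ℝ) (f : X → ℝ) : gfun p (fun x => k * f x) = k * gfun p f := by
  simp only [gfun, mul_assoc, ← Finset.mul_sum, eta_smul]

lemma gfun_super {X C Y I : Type*} [Fintype X] [Fintype C] [Fintype Y] [Fintype I]
    (p : X → C → Y → ℝ) (hp : ∀ x c y, 0 ≤ p x c y)
    (f : I → X → ℝ) (hf : ∀ i x, 0 ≤ f i x) :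
    ∑ i, gfun p (f i) ≤ gfun p (fun x => ∑ i, f i x) := by
  simp only [gfun]
  rw [Finset.sum_comm]
  refine Finset.sum_le_sum fun c _ => ?_
  refine (eta_super (fun i y => ∑ x, f i x * p x c y) fun i y =>
    Finset.sum_nonneg fun x _ => mul_nonneg (hf i x) (hp x c y)).trans (le_of_eq ?_)
  congr 1; ext y
  rw [Finset.sum_comm]; simp only [Finset.sum_mul]

lemma hfun_rate {X C M : Type*} [Fintype X] [Fintype C] [Fintype M] (s : X → C → ℝ)
    (hs : ∀ x c, 0 ≤ s x c) (hs1 : ∑ x, ∑ c, s x c = 1)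
    (f : M → X → ℝ) (hf : ∀ m x, 0 ≤ f m x) (hf1 : ∀ x, ∑ m, f m x = 1) :
    hfun s (fun _ => 1) - ∑ m, hfun s (f m) ≤ Real.log (Fintype.card M) := by
  have key : ∀ c, eta (fun x => s x c) ≤
      ∑ m, eta (fun x => f m x * s x c) + (∑ x, s x c) * Real.log (Fintype.card M) := by
    intro c
    have h1 := eta_chain (fun m x => f m x * s x c)
    have h2 := eta_chain (fun x m => f m x * s x c)
    have h3 : eta (fun q : M × X => f q.1 q.2 * s q.2 c)
        = eta (fun q : X × M => f q.2 q.1 * s q.1 c) := by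
      simp only [eta]
      rw [← (Equiv.prodComm X M).sum_comp, ← (Equiv.prodComm X M).sum_comp]
      simp
    have h4 : 0 ≤ ∑ x, eta (fun m => f m x * s x c) :=
      Finset.sum_nonneg fun x _ => eta_nonneg _ fun m => mul_nonneg (hf m x) (hs x c)
    have h5 := eta_le_card (fun m => ∑ x, f m x * s x c) fun m =>
      Finset.sum_nonneg fun x _ => mul_nonneg (hf m x) (hs x c)
    have h6 : ∀ x, ∑ m, f m x * s x c = s x c := by
      intro x; rw [← Finset.sum_mul, hf1, one_mul]
    rw [Finset.sum_comm] at h5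
    simp only [h6] at h5 h2
    linarith
  have := Finset.sum_le_sum fun c (_ : c ∈ Finset.univ) => key c
  rw [Finset.sum_add_distrib, ← Finset.sum_mul, Finset.sum_comm (f := fun c x => s x c), hs1,
    Finset.sum_comm] at this
  simp only [hfun, one_mul]
  linarith

lemma sum_sN {X C : Type*} [Fintype X] [Fintype C] (s : X → C → ℝ)
    (hs1 : ∑ x, ∑ c, s x c = 1) (n : ℕ) :
    ∑ x, ∑ c, sN s n x c = 1 := by
  induction n with
  | zero => simp [sN]
  | succ n ih =>
    simp only [sum_cons, sN, Fin.prod_univ_succ, Fin.cons_zero, Fin.cons_succ,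
      ← Finset.mul_sum] at *
    calc _ = ∑ a, ∑ a_1, s a a_1 * ∑ i : Fin n → X, ∑ t : Fin n → C, ∏ j, s (i j) (t j) := by
          refine Finset.sum_congr rfl fun a _ => ?_
          rw [Finset.sum_comm]
          simp only [Finset.mul_sum]
      _ = 1 := by simp only [ih, mul_one, hs1]

lemma hfun_cons {X C : Type*} [Fintype X] [Fintype C] (s : X → C → ℝ) (n : ℕ)
    (f : (Fin (n+1) → X) → ℝ) :
    hfun (sN s (n+1)) f =
      ∑ c2, hfun s (fun x1 => ∑ x2, f (Fin.cons x1 x2) * sN s n x2 c2)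
      + ∑ x1, ∑ c1, hfun (sN s n) (fun x2 => s x1 c1 * f (Fin.cons x1 x2)) := by
  simp only [hfun, eta_cons]
  rw [Finset.sum_add_distrib, sum_cons, sum_cons]
  simp only [sN, Fin.prod_univ_succ, Fin.cons_zero, Fin.cons_succ]
  congr 1
  · rw [Finset.sum_comm]
    refine Finset.sum_congr rfl fun c2 _ => Finset.sum_congr rfl fun c1 _ => ?_
    congr 1; ext x1
    rw [Finset.sum_mul]
    refine Finset.sum_congr rfl fun x2 _ => ?_
    ring
  · have : ∀ c1 : C, ∑ t : Fin n → C, ∑ a, eta (fun t_1 : Fin n → X =>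
        f (Fin.cons a t_1) * (s a c1 * ∏ i, s (t_1 i) (t i))) =
        ∑ a, ∑ t : Fin n → C, eta (fun t_1 : Fin n → X =>
        f (Fin.cons a t_1) * (s a c1 * ∏ i, s (t_1 i) (t i))) := fun c1 => Finset.sum_comm
    simp only [this]
    rw [Finset.sum_comm]
    refine Finset.sum_congr rfl fun x1 _ => Finset.sum_congr rfl fun c1 _ =>
      Finset.sum_congr rfl fun c2 _ => ?_
    congr 1; ext x2; ring

lemma hfun_one {X C : Type*} [Fintype X] [Fintype C] (s : X → C → ℝ)
    (hs1 : ∑ x, ∑ c, s x c = 1) (n : ℕ) :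
    hfun (sN s n) (fun _ => 1) = n * hfun s (fun _ => 1) := by
  induction n with
  | zero => simp [hfun, eta, sN]
  | succ n ih =>
    rw [hfun_cons]
    have e1 : ∀ c2 : Fin n → C, hfun s (fun _ => ∑ x2, 1 * sN s n x2 c2) =
        (∑ x2, sN s n x2 c2) * hfun s (fun _ => 1) := by
      intro c2
      rw [← hfun_smul]; simp
    simp only [e1, hfun_smul, ih]
    rw [← Finset.sum_mul, Finset.sum_comm, sum_sN s hs1]
    simp only [← Finset.sum_mul, hs1]
    push_cast; ring

lemma sum_pN {X C Y : Type*} [Fintype Y] (p : X → C → Y → ℝ) (n : ℕ) (x : Fin n → X)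
    (c : Fin n → C) : ∑ y, pN p n x c y = sN (fun x c => ∑ y, p x c y) n x c := by
  simp only [pN, sN, Finset.prod_univ_sum, Fintype.piFinset_univ]

lemma gfun_cons {X C Y : Type*} [Fintype X] [Fintype C] [Fintype Y] (p : X → C → Y → ℝ)
    (hp : ∀ x c y, 0 ≤ p x c y) (n : ℕ)
    (f : (Fin (n+1) → X) → ℝ) (hf : ∀ x, 0 ≤ f x) :
      ∑ c2, gfun p (fun x1 => ∑ x2, f (Fin.cons x1 x2) * sN (fun x c => ∑ y, p x c y) n x2 c2)
      + ∑ x1, ∑ c1, gfun (pN p n) (fun x2 => (∑ y, p x1 c1 y) * f (Fin.cons x1 x2))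
      ≤ gfun (pN p (n+1)) f := by
  have hpn : ∀ x c y, 0 ≤ pN p n x c y := fun x c y => Finset.prod_nonneg fun i _ => hp _ _ _
  have E : gfun (pN p (n+1)) f = ∑ c2, gfun p (fun x1 => ∑ x2, f (Fin.cons x1 x2) *
      sN (fun x c => ∑ y, p x c y) n x2 c2)
      + ∑ c1, ∑ y1, gfun (pN p n) (fun x2 => ∑ x1, p x1 c1 y1 * f (Fin.cons x1 x2)) := by
    simp only [gfun, eta_cons]
    rw [Finset.sum_add_distrib, sum_cons, sum_cons]
    congr 1
    · rw [Finset.sum_comm]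
      refine Finset.sum_congr rfl fun c2 _ => Finset.sum_congr rfl fun c1 _ => ?_
      congr 1; ext y1
      rw [Finset.sum_comm, sum_cons]
      refine Finset.sum_congr rfl fun x1 _ => ?_
      rw [Finset.sum_mul]
      refine Finset.sum_congr rfl fun x2 _ => ?_
      rw [← sum_pN]
      simp only [pN, Fin.prod_univ_succ, Fin.cons_zero, Fin.cons_succ, Finset.mul_sum,
        Finset.sum_mul]
      refine Finset.sum_congr rfl fun y2 _ => ?_
      ring
    · refine Finset.sum_congr rfl fun c1 _ => ?_
      rw [Finset.sum_comm]
      refine Finset.sum_congr rfl fun y1 _ => Finset.sum_congr rfl fun c2 _ => ?_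
      congr 1; ext y2
      rw [sum_cons, Finset.sum_comm]
      refine Finset.sum_congr rfl fun x2 _ => ?_
      rw [Finset.sum_mul]
      refine Finset.sum_congr rfl fun x1 _ => ?_
      simp only [pN, Fin.prod_univ_succ, Fin.cons_zero, Fin.cons_succ]
      ring
  rw [E]
  refine add_le_add le_rfl ?_
  rw [Finset.sum_comm]
  refine Finset.sum_le_sum fun c1 _ => ?_
  calc _ = ∑ y1, ∑ x1, gfun (pN p n) (fun x2 => p x1 c1 y1 * f (Fin.cons x1 x2)) := by
        simp only [gfun_smul]
        rw [Finset.sum_comm]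
        simp only [Finset.sum_mul]
    _ ≤ _ := by
        refine Finset.sum_le_sum fun y1 _ => ?_
        exact gfun_super _ hpn _ fun x1 x2 => mul_nonneg (hp _ _ _) (hf _)

theorem single_letter.{u, v, w} {X : Type u} {C : Type v} {Y : Type w} [Fintype X] [Fintype C] [Fintype Y]
    (p : X → C → Y → ℝ) (hp : ∀ x c y, 0 ≤ p x c y)
    (hp1 : ∑ x, ∑ c, ∑ y, p x c y = 1) (n : ℕ) :
    ∀ (M : Type (max u v)) [Fintype M] (f : M → (Fin n → X) → ℝ), (∀ m x, 0 ≤ f m x) →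
      (∀ x, ∑ m, f m x = 1) →
      ∃ (U : Type (max u v)) (_ : Fintype U) (c : U → X → ℝ), (∀ u x, 0 ≤ c u x) ∧
        (∀ x, ∑ u, c u x = n) ∧
        ∑ u, hfun (fun x c => ∑ y, p x c y) (c u)
          = ∑ m, hfun (sN (fun x c => ∑ y, p x c y) n) (f m) ∧
        ∑ u, gfun p (c u) ≤ ∑ m, gfun (pN p n) (f m) := by
  induction n with
  | zero =>
    intro M _ f hf hf1
    refine ⟨PEmpty, inferInstance, fun u => u.elim, fun u => u.elim, by simp, ?_, ?_⟩
    · simp [hfun, eta, sN]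
    · simp [gfun, eta, pN]
  | succ n ih =>
    intro M _ f hf hf1
    obtain ⟨U2, _, c2, h0, h1, h2, h3⟩ := ih (M × X × C)
      (fun q x2 => (∑ y, p q.2.1 q.2.2 y) * f q.1 (Fin.cons q.2.1 x2))
      (fun q x => mul_nonneg (Finset.sum_nonneg fun _ _ => hp _ _ _) (hf _ _))
      (by
        intro x2
        simp only [Fintype.sum_prod_type]
        rw [Finset.sum_comm]
        rw [← hp1]
        refine Finset.sum_congr rfl fun x1 _ => ?_
        rw [Finset.sum_comm]
        refine Finset.sum_congr rfl fun c1 _ => ?_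
        rw [← Finset.mul_sum, hf1, mul_one])
    have hs1 := sum_sN (fun x c => ∑ y, p x c y) hp1 n
    refine ⟨(M × (Fin n → C)) ⊕ U2, inferInstance, Sum.elim (fun q x1 => ∑ x2, f q.1 (Fin.cons x1 x2) *
      sN (fun x c => ∑ y, p x c y) n x2 q.2) c2, ?_, ?_, ?_, ?_⟩
    · rintro (q | u) x
      · exact Finset.sum_nonneg fun x2 _ => mul_nonneg (hf _ _)
          (Finset.prod_nonneg fun i _ => Finset.sum_nonneg fun _ _ => hp _ _ _)
      · exact h0 u x
    · intro x
      simp only [Fintype.sum_sum_type, Sum.elim_inl, Sum.elim_inr, h1, Fintype.sum_prod_type]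
      rw [Finset.sum_comm]
      have : ∀ cc : Fin n → C, ∑ m, ∑ x2, f m (Fin.cons x x2) *
          sN (fun x c => ∑ y, p x c y) n x2 cc = ∑ x2, sN (fun x c => ∑ y, p x c y) n x2 cc := by
        intro cc
        rw [Finset.sum_comm]
        simp only [← Finset.sum_mul, hf1, one_mul]
      simp only [this]
      rw [Finset.sum_comm, hs1]
      push_cast; ring
    · simp only [Fintype.sum_sum_type, Sum.elim_inl, Sum.elim_inr, h2, Fintype.sum_prod_type,
        hfun_cons, Finset.sum_add_distrib]
    · simp only [Fintype.sum_sum_type, Sum.elim_inl, Sum.elim_inr, Fintype.sum_prod_type] at h3 ⊢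
      refine (add_le_add_right h3 _).trans ?_
      rw [← Finset.sum_add_distrib]
      exact Finset.sum_le_sum fun m _ => gfun_cons p hp n (f m) (hf m)

lemma pushf_eq {Ω A B : Type*} [Fintype Ω] [Fintype B] (p : Ω → ℝ) (f : Ω → A)
    (g : A → B → Ω) (k : Ω → B) (h1 : ∀ a b, f (g a b) = a) (h2 : ∀ a b, k (g a b) = b)
    (h3 : ∀ w, g (f w) (k w) = w) (a : A) : pushf p f a = ∑ b, p (g a b) := by
  classical
  unfold pushf
  rw [← Finset.sum_filter]
  symm
  refine Finset.sum_bij' (fun b _ => g a b) (fun w _ => k w) ?_ ?_ ?_ ?_ ?_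
  · intro b _; simp [h1]
  · intro w _; simp
  · intro b _; exact h2 a b
  · intro w hw
    have : f w = a := by simpa using hw
    rw [← this]; exact h3 w
  · intro b _; rfl

lemma sum_pN_log {X C Y : Type*} [Fintype X] [Fintype C] [Fintype Y] (p : X → C → Y → ℝ)
    (hp1 : ∑ x, ∑ c, ∑ y, p x c y = 1) (r : C → Y → ℝ) (hr : ∀ x c y, p x c y ≠ 0 → 0 < r c y)
    (n : ℕ) :
    ∑ x, ∑ c, ∑ y, pN p n x c y * Real.log (sN r n c y)
      = n * ∑ x, ∑ c, ∑ y, p x c y * Real.log (r c y) := by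
  induction n with
  | zero => simp [sN]
  | succ n ih =>
    have hs1 : ∑ x, ∑ c, ∑ y, pN p n x c y = 1 := by
      simp only [sum_pN]; exact sum_sN _ hp1 n
    have key : ∀ x1 (x2 : Fin n → X) c1 (c2 : Fin n → C) y1 (y2 : Fin n → Y),
        pN p (n+1) (Fin.cons x1 x2) (Fin.cons c1 c2) (Fin.cons y1 y2)
          * Real.log (sN r (n+1) (Fin.cons c1 c2) (Fin.cons y1 y2))
        = (p x1 c1 y1 * Real.log (r c1 y1)) * pN p n x2 c2 y2
          + p x1 c1 y1 * (pN p n x2 c2 y2 * Real.log (sN r n c2 y2)) := by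
      intro x1 x2 c1 c2 y1 y2
      simp only [pN, sN, Fin.prod_univ_succ, Fin.cons_zero, Fin.cons_succ]
      by_cases h1 : p x1 c1 y1 = 0
      · simp [h1]
      by_cases h2 : ∏ i, p (x2 i) (c2 i) (y2 i) = 0
      · simp [h2]
      have h3 : 0 < ∏ i, r (c2 i) (y2 i) :=
        Finset.prod_pos fun i _ => hr _ _ _ (Finset.prod_ne_zero_iff.1 h2 i (Finset.mem_univ i))
      rw [Real.log_mul (hr _ _ _ h1).ne' h3.ne']
      ring
    simp only [sum_cons, key]
    have sw : ∀ (F : X → (Fin n → X) → C → (Fin n → C) → Y → (Fin n → Y) → ℝ),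
        ∑ x1, ∑ x2, ∑ c1, ∑ c2, ∑ y1, ∑ y2, F x1 x2 c1 c2 y1 y2
        = ∑ x1, ∑ c1, ∑ y1, ∑ x2, ∑ c2, ∑ y2, F x1 x2 c1 c2 y1 y2 := by
      intro F
      refine Finset.sum_congr rfl fun x1 _ => ?_
      rw [Finset.sum_comm]
      refine Finset.sum_congr rfl fun c1 _ => ?_
      rw [Finset.sum_comm]
      have : ∀ c2, ∑ x2, ∑ y1, ∑ y2, F x1 x2 c1 c2 y1 y2 = ∑ y1, ∑ x2, ∑ y2, F x1 x2 c1 c2 y1 y2 :=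
        fun c2 => Finset.sum_comm
      simp only [this]
      rw [Finset.sum_comm]
      exact Finset.sum_congr rfl fun y1 _ => Finset.sum_comm
    rw [sw]
    simp only [Finset.sum_add_distrib, ← Finset.mul_sum, hs1, ih, ← Finset.sum_mul, hp1]
    push_cast; ring

def zipE (J Z Y : Type*) (n : ℕ) : ((Fin n → J × Z) × (Fin n → Y)) ≃ (Fin n → J × Z × Y) where
  toFun q := fun i => ((q.1 i).1, (q.1 i).2, q.2 i)
  invFun w := (fun i => ((w i).1, (w i).2.1), fun i => (w i).2.2)
  left_inv _ := rfl
  right_inv _ := rfl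

lemma kl_eq {X J Z Y : Type*} [Fintype X] [Fintype J] [Fintype Z] [Fintype Y]
    (P Q : X × J × Z × Y → ℝ) (hP : IsPMF P) (r : J × Z → Y → ℝ)
    (hr : ∀ x c y, P (x, c.1, c.2, y) ≠ 0 → 0 < r c y)
    (hQ : ∀ x c y, Q (x, c.1, c.2, y) = (∑ y', P (x, c.1, c.2, y')) * r c y)
    (n K : ℕ) (κ : (Fin n → X) → Fin K → ℝ) (hκ : ∀ x, IsPMF (κ x)) :
    klDiv (fun mw : Fin K × (Fin n → J × Z × Y) => ∑ x : Fin n → X, (∏ i, P (x i, mw.2 i)) * κ x mw.1)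
      (fun mw : Fin K × (Fin n → J × Z × Y) => ∑ x : Fin n → X, (∏ i, Q (x i, mw.2 i)) * κ x mw.1)
    = ((- ∑ m, gfun (pN (fun x (c : J × Z) y => P (x, c.1, c.2, y)) n) (fun x => κ x m)
        - n * ∑ x, ∑ c : J × Z, ∑ y, P (x, c.1, c.2, y) * Real.log (r c y) : ℝ) : EReal) := by
  set p : X → J × Z → Y → ℝ := fun x c y => P (x, c.1, c.2, y) with hpdef
  have hp1 : ∑ x, ∑ c, ∑ y, p x c y = 1 := by
    rw [← hP.2]; simp only [Fintype.sum_prod_type, hpdef]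
  have hp : ∀ x c y, 0 ≤ p x c y := fun x c y => hP.1 _
  have hpn : ∀ x c y, 0 ≤ pN p n x c y := fun x c y => Finset.prod_nonneg fun i _ => hp _ _ _
  set F : Fin K → (Fin n → J × Z) → (Fin n → Y) → ℝ :=
    fun m c y => ∑ x, κ x m * pN p n x c y with hF
  have hF0 : ∀ m c y, 0 ≤ F m c y := fun m c y =>
    Finset.sum_nonneg fun x _ => mul_nonneg ((hκ x).1 m) (hpn x c y)
  have eF : ∀ m c y, ∑ x : Fin n → X, (∏ i, P (x i, zipE J Z Y n (c, y) i)) * κ x m = F m c y := by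
    intro m c y
    exact Finset.sum_congr rfl fun x _ => mul_comm _ _
  have eG : ∀ m c y, ∑ x : Fin n → X, (∏ i, Q (x i, zipE J Z Y n (c, y) i)) * κ x m
      = (∑ y', F m c y') * sN r n c y := by
    intro m c y
    rw [hF]; dsimp only
    rw [Finset.sum_comm, Finset.sum_mul]
    refine Finset.sum_congr rfl fun x _ => ?_
    rw [← Finset.mul_sum, sum_pN]
    simp only [zipE, Equiv.coe_fn_mk, hQ, sN, Finset.prod_mul_distrib, hpdef]
    ring
  have hpos : ∀ m c y, F m c y ≠ 0 → 0 < F m c y ∧ 0 < ∑ y', F m c y' ∧ 0 < sN r n c y := by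
    intro m c y h
    have h1 : 0 < F m c y := lt_of_le_of_ne (hF0 m c y) (Ne.symm h)
    refine ⟨h1, h1.trans_le (Finset.single_le_sum (f := F m c) (fun b _ => hF0 m c b)
      (Finset.mem_univ y)), ?_⟩
    obtain ⟨x, _, hx⟩ := Finset.exists_ne_zero_of_sum_ne_zero h
    have h2 := right_ne_zero_of_mul hx
    exact Finset.prod_pos fun i _ =>
      hr _ _ _ (Finset.prod_ne_zero_iff.1 h2 i (Finset.mem_univ i))
  unfold klDiv
  rw [if_pos]
  · congr 1
    rw [Fintype.sum_prod_type]
    simp only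
    have e1 : ∀ m, ∑ w : Fin n → J × Z × Y, (∑ x : Fin n → X, (∏ i, P (x i, w i)) * κ x m) *
        Real.log ((∑ x : Fin n → X, (∏ i, P (x i, w i)) * κ x m) /
          (∑ x : Fin n → X, (∏ i, Q (x i, w i)) * κ x m))
        = - gfun (pN p n) (fun x => κ x m) - ∑ c, ∑ y, F m c y * Real.log (sN r n c y) := by
      intro m
      rw [← (zipE J Z Y n).sum_comp, Fintype.sum_prod_type]
      simp only [eF, eG, gfun]
      rw [← Finset.sum_neg_distrib, ← Finset.sum_sub_distrib]
      refine Finset.sum_congr rfl fun c _ => ?_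
      change _ = - eta (F m c) - _
      rw [eta_eq, ← Finset.sum_neg_distrib, ← Finset.sum_sub_distrib]
      refine Finset.sum_congr rfl fun y _ => ?_
      by_cases h : F m c y = 0
      · simp [h]
      obtain ⟨h1, h2, h3⟩ := hpos m c y h
      rw [Real.log_div h1.ne' (by positivity), Real.log_mul h2.ne' h3.ne', Real.negMulLog]
      ring
    simp only [e1]
    rw [Finset.sum_sub_distrib, Finset.sum_neg_distrib]
    congr 1
    rw [← sum_pN_log p hp1 r hr n]
    have sw : ∑ x, ∑ c, ∑ y, pN p n x c y * Real.log (sN r n c y)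
        = ∑ c, ∑ y, ∑ x, pN p n x c y * Real.log (sN r n c y) := by
      rw [Finset.sum_comm]
      exact Finset.sum_congr rfl fun c _ => Finset.sum_comm
    rw [sw, Finset.sum_comm]
    refine Finset.sum_congr rfl fun c _ => ?_
    rw [Finset.sum_comm]
    refine Finset.sum_congr rfl fun y _ => ?_
    rw [← Finset.sum_mul, ← Finset.sum_mul, hF]
    dsimp only
    rw [Finset.sum_comm]
    simp only [← Finset.sum_mul, (hκ _).2, one_mul]
  · rintro ⟨m, w⟩ h
    obtain ⟨⟨c, y⟩, rfl⟩ := (zipE J Z Y n).surjective w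
    simp only [eF, eG] at h ⊢
    by_contra h'
    obtain ⟨h1, h2, h3⟩ := hpos m c y h'
    have := mul_pos h2 h3
    linarith

lemma entropy_eq {A : Type*} [Fintype A] (p : A → ℝ) : entropy p = ∑ a, Real.negMulLog (p a) := by
  simp [entropy, Real.negMulLog]

lemma condMI_rate {X J Z Y : Type*} [Fintype X] [Fintype J] [Fintype Z] [Fintype Y]
    (P : X × J × Z × Y → ℝ) (m : ℕ) (ch : X → Fin m → ℝ) (hch : ∀ x, ∑ u, ch x u = 1) :
    condMI (fun w : Fin m × X × J × Z × Y => ch w.2.1 w.1 * P w.2)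
              (fun w => w.1) (fun w => w.2.1) (fun w => (w.2.2.2.1, w.2.2.1))
    = hfun (fun x (c : J × Z) => ∑ y, P (x, c.1, c.2, y)) (fun _ => 1)
      - ∑ u, hfun (fun x (c : J × Z) => ∑ y, P (x, c.1, c.2, y)) (fun x => ch x u) := by
  classical
  set s : X → J × Z → ℝ := fun x (c : J × Z) => ∑ y, P (x, c.1, c.2, y) with hs
  have a1 : ∀ u z j, pushf (fun w : Fin m × X × J × Z × Y => ch w.2.1 w.1 * P w.2)
      (fun w => (w.1, (w.2.2.2.1, w.2.2.1))) (u, (z, j)) = ∑ x, ch x u * s x (j, z) := by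
    intro u z j
    rw [pushf_eq _ _ (fun a (b : X × Y) => (a.1, b.1, a.2.2, a.2.1, b.2))
      (fun w => (w.2.1, w.2.2.2.2)) (fun _ _ => rfl) (fun _ _ => rfl) (fun _ => rfl)]
    simp [Fintype.sum_prod_type, hs, Finset.mul_sum]
  have a2 : ∀ x z j, pushf (fun w : Fin m × X × J × Z × Y => ch w.2.1 w.1 * P w.2)
      (fun w => (w.2.1, (w.2.2.2.1, w.2.2.1))) (x, (z, j)) = s x (j, z) := by
    intro x z j
    rw [pushf_eq _ _ (fun a (b : Fin m × Y) => (b.1, a.1, a.2.2, a.2.1, b.2))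
      (fun w => (w.1, w.2.2.2.2)) (fun _ _ => rfl) (fun _ _ => rfl) (fun _ => rfl)]
    simp [Fintype.sum_prod_type, hs]
    simp only [← Finset.mul_sum, ← Finset.sum_mul, hch, one_mul]
  have a3 : ∀ u x z j, pushf (fun w : Fin m × X × J × Z × Y => ch w.2.1 w.1 * P w.2)
      (fun w => (w.1, w.2.1, (w.2.2.2.1, w.2.2.1))) (u, x, (z, j)) = ch x u * s x (j, z) := by
    intro u x z j
    rw [pushf_eq _ _ (fun a (b : Y) => (a.1, a.2.1, a.2.2.2, a.2.2.1, b))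
      (fun w => w.2.2.2.2) (fun _ _ => rfl) (fun _ _ => rfl) (fun _ => rfl)]
    simp [Fintype.sum_prod_type, hs, Finset.mul_sum]
  have a4 : ∀ z j, pushf (fun w : Fin m × X × J × Z × Y => ch w.2.1 w.1 * P w.2)
      (fun w => (w.2.2.2.1, w.2.2.1)) (z, j) = ∑ x, s x (j, z) := by
    intro z j
    rw [pushf_eq _ _ (fun a (b : Fin m × X × Y) => (b.1, b.2.1, a.2, a.1, b.2.2))
      (fun w => (w.1, w.2.1, w.2.2.2.2)) (fun _ _ => rfl) (fun _ _ => rfl) (fun _ => rfl)]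
    simp [Fintype.sum_prod_type, hs]
    rw [Finset.sum_comm]
    refine Finset.sum_congr rfl fun x _ => ?_
    simp only [← Finset.mul_sum, ← Finset.sum_mul, hch, one_mul]
  simp only [condMI, entropy_eq, hfun, eta, Fintype.sum_prod_type, a1, a2, a3, a4, one_mul,
    Finset.sum_sub_distrib]
  have b1 : ∀ (F : Z → J → ℝ), ∑ z, ∑ j, F z j = ∑ j, ∑ z, F z j := fun F => Finset.sum_comm
  have b2 : ∀ (F : X → J → Z → ℝ), ∑ j, ∑ z, ∑ x, F x j z = ∑ x, ∑ j, ∑ z, F x j z := by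
    intro F
    rw [Finset.sum_comm (s := (Finset.univ : Finset X))]
    exact Finset.sum_congr rfl fun c _ => Finset.sum_comm
  simp only [b1, b2]
  ring

lemma condMI_gain {X J Z Y : Type*} [Fintype X] [Fintype J] [Fintype Z] [Fintype Y]
    (P : X × J × Z × Y → ℝ) (m : ℕ) (ch : X → Fin m → ℝ) (hch : ∀ x, ∑ u, ch x u = 1) :
    condMI (fun w : Fin m × X × J × Z × Y => ch w.2.1 w.1 * P w.2)
              (fun w => w.2.2.2.2) (fun w => (w.1, w.2.2.1)) (fun w => w.2.2.2.1)
    = (∑ z, eta (fun y => ∑ x, ∑ j, P (x, j, z, y)))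
      - ∑ u, gfun (fun x (c : J × Z) y => P (x, c.1, c.2, y)) (fun x => ch x u) := by
  classical
  have a1 : ∀ y z, pushf (fun w : Fin m × X × J × Z × Y => ch w.2.1 w.1 * P w.2)
      (fun w => (w.2.2.2.2, w.2.2.2.1)) (y, z) = ∑ x, ∑ j, P (x, j, z, y) := by
    intro y z
    rw [pushf_eq _ _ (fun a (b : Fin m × X × J) => (b.1, b.2.1, b.2.2, a.2, a.1))
      (fun w => (w.1, w.2.1, w.2.2.1)) (fun _ _ => rfl) (fun _ _ => rfl) (fun _ => rfl)]
    simp [Fintype.sum_prod_type]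
    rw [Finset.sum_comm]
    refine Finset.sum_congr rfl fun x _ => ?_
    simp only [← Finset.mul_sum, ← Finset.sum_mul, hch, one_mul]
  have a2 : ∀ u j z, pushf (fun w : Fin m × X × J × Z × Y => ch w.2.1 w.1 * P w.2)
      (fun w => ((w.1, w.2.2.1), w.2.2.2.1)) ((u, j), z) = ∑ y, ∑ x, ch x u * P (x, j, z, y) := by
    intro u j z
    rw [pushf_eq _ _ (fun a (b : X × Y) => (a.1.1, b.1, a.1.2, a.2, b.2))
      (fun w => (w.2.1, w.2.2.2.2)) (fun _ _ => rfl) (fun _ _ => rfl) (fun _ => rfl)]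
    simp [Fintype.sum_prod_type]
    rw [Finset.sum_comm]
  have a3 : ∀ y u j z, pushf (fun w : Fin m × X × J × Z × Y => ch w.2.1 w.1 * P w.2)
      (fun w => (w.2.2.2.2, (w.1, w.2.2.1), w.2.2.2.1)) (y, (u, j), z)
      = ∑ x, ch x u * P (x, j, z, y) := by
    intro y u j z
    rw [pushf_eq _ _ (fun a (b : X) => (a.2.1.1, b, a.2.1.2, a.2.2, a.1))
      (fun w => w.2.1) (fun _ _ => rfl) (fun _ _ => rfl) (fun _ => rfl)]
  have a4 : ∀ z, pushf (fun w : Fin m × X × J × Z × Y => ch w.2.1 w.1 * P w.2)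
      (fun w => w.2.2.2.1) z = ∑ y, ∑ x, ∑ j, P (x, j, z, y) := by
    intro z
    rw [pushf_eq _ _ (fun a (b : Fin m × X × J × Y) => (b.1, b.2.1, b.2.2.1, a, b.2.2.2))
      (fun w => (w.1, w.2.1, w.2.2.1, w.2.2.2.2)) (fun _ _ => rfl) (fun _ _ => rfl) (fun _ => rfl)]
    simp [Fintype.sum_prod_type]
    have : ∀ x, ∑ u, ∑ j, ∑ y, ch x u * P (x, j, z, y) = ∑ y, ∑ j, P (x, j, z, y) := by
      intro x
      simp only [← Finset.mul_sum, ← Finset.sum_mul, hch, one_mul]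
      rw [Finset.sum_comm]
    rw [Finset.sum_comm]
    simp only [this]
    rw [Finset.sum_comm]
  simp only [condMI, entropy_eq, gfun, eta, Fintype.sum_prod_type, a1, a2, a3, a4,
    Finset.sum_sub_distrib]
  have b1 : ∀ (F : Z → Y → ℝ), ∑ z, ∑ y, F z y = ∑ y, ∑ z, F z y := fun F => Finset.sum_comm
  have b2 : ∀ (F : Fin m → J → Z → Y → ℝ), ∑ u, ∑ j, ∑ z, ∑ y, F u j z y
      = ∑ y, ∑ u, ∑ j, ∑ z, F u j z y := by
    intro F
    rw [Finset.sum_comm (s := (Finset.univ : Finset Y))]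
    refine Finset.sum_congr rfl fun c _ => ?_
    rw [Finset.sum_comm (s := (Finset.univ : Finset Y))]
    refine Finset.sum_congr rfl fun c _ => Finset.sum_comm
  rw [b2 (fun u j z y => Real.negMulLog (∑ x, ch x u * P (x, j, z, y)))]
  rw [b1 (fun z y => Real.negMulLog (∑ x, ∑ j, P (x, j, z, y)))]
  ring

/-- equality case of conditional independence, in coordinates -/
lemma ci_core {A Z Y : Type*} [Fintype A] [Fintype Z] [Fintype Y]
    (q : A → Z → Y → ℝ) (hq : ∀ a z y, 0 ≤ q a z y)
    (h : ∑ z, (eta (fun y => ∑ a, q a z y) - ∑ a, eta (fun y => q a z y)) = 0) (a : A) (z : Z) (y : Y) :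
    q a z y = (∑ y', q a z y') * ((∑ a', q a' z y) / ∑ y', ∑ a', q a' z y') := by
  set S : A → Z → ℝ := fun a z => ∑ y', q a z y' with hS
  set T : Z → Y → ℝ := fun z y => ∑ a', q a' z y with hT
  set N : Z → ℝ := fun z => ∑ y', T z y' with hN
  have hT0 : ∀ z y, 0 ≤ T z y := fun z y => Finset.sum_nonneg fun _ _ => hq _ _ _
  have hS0 : ∀ a z, 0 ≤ S a z := fun z y => Finset.sum_nonneg fun _ _ => hq _ _ _
  have hqT : ∀ a z y, q a z y ≤ T z y := fun a z y =>
    Finset.single_le_sum (f := fun a => q a z y) (fun b _ => hq b z y) (Finset.mem_univ a)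
  have hqS : ∀ a z y, q a z y ≤ S a z := fun a z y =>
    Finset.single_le_sum (f := fun y => q a z y) (fun b _ => hq a z b) (Finset.mem_univ y)
  have hTN : ∀ z y, T z y ≤ N z := fun z y =>
    Finset.single_le_sum (f := fun y => T z y) (fun b _ => hT0 z b) (Finset.mem_univ y)
  have hN0 : ∀ z, 0 ≤ N z := fun z => Finset.sum_nonneg fun _ _ => hT0 _ _
  have hSN : ∀ z, ∑ a, S a z = N z := by
    intro z; simp only [hS, hN, hT]; exact Finset.sum_comm
  -- termwise deficit
  set t : A → Z → Y → ℝ := fun a z y => S a z * (T z y / N z) with ht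
  set d : A → Z → Y → ℝ := fun a z y =>
    q a z y * (Real.log (q a z y) - Real.log (S a z) - Real.log (T z y) + Real.log (N z))
      + t a z y - q a z y with hd
  have ht0 : ∀ a z y, 0 ≤ t a z y := fun a z y =>
    mul_nonneg (hS0 _ _) (div_nonneg (hT0 _ _) (hN0 _))
  have dk : ∀ a z y, 0 < t a z y → d a z y = t a z y * InformationTheory.klFun (q a z y / t a z y) := by
    intro a z y htp
    rcases (hq a z y).eq_or_lt with h0 | h0
    · simp [hd, ← h0, InformationTheory.klFun_zero]
    have hTp : 0 < T z y := h0.trans_le (hqT a z y)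
    have hSp : 0 < S a z := h0.trans_le (hqS a z y)
    have hNp : 0 < N z := hTp.trans_le (hTN z y)
    have hl : Real.log (q a z y / t a z y)
        = Real.log (q a z y) - Real.log (S a z) - Real.log (T z y) + Real.log (N z) := by
      rw [Real.log_div h0.ne' htp.ne', ht]
      dsimp only
      rw [Real.log_mul hSp.ne' (by positivity), Real.log_div hTp.ne' hNp.ne']
      ring
    rw [InformationTheory.klFun_apply, hl]
    simp only [hd]
    field_simp
  have tz : ∀ a z y, t a z y = 0 → q a z y = 0 := by
    intro a z y h0
    by_contra h1
    have h0' : 0 < q a z y := lt_of_le_of_ne (hq a z y) (Ne.symm h1)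
    have hTp : 0 < T z y := h0'.trans_le (hqT a z y)
    have hSp : 0 < S a z := h0'.trans_le (hqS a z y)
    have hNp : 0 < N z := hTp.trans_le (hTN z y)
    have : 0 < t a z y := by simp only [ht]; positivity
    linarith
  have d0 : ∀ a z y, 0 ≤ d a z y := by
    intro a z y
    rcases (ht0 a z y).eq_or_lt with h0 | h0
    · simp [hd, tz a z y h0.symm, ← h0]
    · rw [dk a z y h0]
      exact mul_nonneg h0.le (InformationTheory.klFun_nonneg (div_nonneg (hq _ _ _) h0.le))
  have dsum : ∑ z, ∑ a, ∑ y, d a z y = 0 := by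
    rw [← h]
    refine Finset.sum_congr rfl fun z _ => ?_
    have e1 : eta (fun y => T z y) = ∑ a, ∑ y, (q a z y * (Real.log (N z) - Real.log (T z y))) := by
      rw [eta_eq, Finset.sum_comm (s := (Finset.univ : Finset A)) (t := (Finset.univ : Finset Y))]
      refine Finset.sum_congr rfl fun y _ => ?_
      rw [← Finset.sum_mul]
      simp only [Real.negMulLog]
      change -T z y * Real.log (T z y) + T z y * Real.log (N z) = T z y * _
      ring
    have e2 : ∑ a, ∑ y, (t a z y - q a z y) = 0 := by
      simp only [Finset.sum_sub_distrib, ht, ← Finset.mul_sum, ← Finset.sum_mul, hSN, ← Finset.sum_div]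
      change N z * (N z / N z) - ∑ a, S a z = 0
      rw [hSN]
      rcases (hN0 z).eq_or_lt with h0 | h0
      · simp [← h0]
      · field_simp; ring
    have e3 : ∀ a, eta (fun y => q a z y)
        = ∑ y, (q a z y * (Real.log (S a z) - Real.log (q a z y))) := by
      intro a
      rw [eta_eq]
      refine Finset.sum_congr rfl fun y _ => ?_
      simp only [Real.negMulLog, hS]
      ring
    change _ = eta (fun y => T z y) - _
    rw [e1]
    simp only [e3]
    rw [← Finset.sum_sub_distrib]
    refine Eq.trans ?_ (add_zero _)
    rw [← e2, ← Finset.sum_add_distrib]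
    refine Finset.sum_congr rfl fun a _ => ?_
    rw [← Finset.sum_sub_distrib, ← Finset.sum_add_distrib]
    refine Finset.sum_congr rfl fun y _ => ?_
    simp only [hd]; ring
  have dz : d a z y = 0 := by
    have h1 := (Finset.sum_eq_zero_iff_of_nonneg (fun z _ => Finset.sum_nonneg fun a _ =>
      Finset.sum_nonneg fun y _ => d0 a z y)).1 dsum z (Finset.mem_univ _)
    have h2 := (Finset.sum_eq_zero_iff_of_nonneg (fun a _ =>
      Finset.sum_nonneg fun y _ => d0 a z y)).1 h1 a (Finset.mem_univ _)
    exact (Finset.sum_eq_zero_iff_of_nonneg (fun y _ => d0 a z y)).1 h2 y (Finset.mem_univ _)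
  change q a z y = t a z y
  rcases (ht0 a z y).eq_or_lt with h0 | h0
  · rw [tz a z y h0.symm, h0]
  · rw [dk a z y h0] at dz
    have := (mul_eq_zero.1 dz).resolve_left h0.ne'
    rw [InformationTheory.klFun_eq_zero_iff (div_nonneg (hq _ _ _) h0.le)] at this
    rwa [div_eq_one_iff_eq h0.ne'] at this

lemma ci_factor {X J Z Y : Type*} [Fintype X] [Fintype J] [Fintype Z] [Fintype Y]
    (Q : X × J × Z × Y → ℝ) (hQ : IsPMF Q)
    (hCI : condMI Q (fun w => w.2.2.2) (fun w => (w.1, w.2.1)) (fun w => w.2.2.1) = 0)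
    (x : X) (j : J) (z : Z) (y : Y) :
    Q (x, j, z, y) = (∑ y', Q (x, j, z, y')) *
      ((∑ x', ∑ j', Q (x', j', z, y)) / ∑ y', ∑ x', ∑ j', Q (x', j', z, y')) := by
  classical
  have := ci_core (fun (a : X × J) z y => Q (a.1, a.2, z, y)) (fun _ _ _ => hQ.1 _) ?_ (x, j) z y
  · simpa only [Fintype.sum_prod_type] using this
  rw [← hCI]
  have a1 : ∀ y z, pushf Q (fun w => (w.2.2.2, w.2.2.1)) (y, z) = ∑ x, ∑ j, Q (x, j, z, y) := by
    intro y z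
    rw [pushf_eq _ _ (fun a (b : X × J) => (b.1, b.2, a.2, a.1))
      (fun w => (w.1, w.2.1)) (fun _ _ => rfl) (fun _ _ => rfl) (fun _ => rfl)]
    simp [Fintype.sum_prod_type]
  have a2 : ∀ x j z, pushf Q (fun w => ((w.1, w.2.1), w.2.2.1)) ((x, j), z) = ∑ y, Q (x, j, z, y) := by
    intro y j z
    rw [pushf_eq _ _ (fun a (b : Y) => (a.1.1, a.1.2, a.2, b))
      (fun w => w.2.2.2) (fun _ _ => rfl) (fun _ _ => rfl) (fun _ => rfl)]
  have a3 : ∀ y x j z, pushf Q (fun w => (w.2.2.2, (w.1, w.2.1), w.2.2.1)) (y, (x, j), z)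
      = Q (x, j, z, y) := by
    intro y x j z
    rw [pushf_eq _ _ (fun a (b : Unit) => (a.2.1.1, a.2.1.2, a.2.2, a.1))
      (fun w => ()) (fun _ _ => rfl) (fun _ _ => rfl) (fun _ => rfl)]
    simp [Fintype.sum_prod_type]
  have a4 : ∀ z, pushf Q (fun w => w.2.2.1) z = ∑ y, ∑ x, ∑ j, Q (x, j, z, y) := by
    intro z
    rw [pushf_eq _ _ (fun a (b : X × J × Y) => (b.1, b.2.1, a, b.2.2))
      (fun w => (w.1, w.2.1, w.2.2.2)) (fun _ _ => rfl) (fun _ _ => rfl) (fun _ => rfl)]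
    simp [Fintype.sum_prod_type]
    rw [Finset.sum_comm]
    have : ∀ j, ∑ x, ∑ y, Q (x, j, z, y) = ∑ y, ∑ x, Q (x, j, z, y) := fun _ => Finset.sum_comm
    simp only [this]
    rw [Finset.sum_comm]
    exact Finset.sum_congr rfl fun y _ => Finset.sum_comm
  simp only [condMI, entropy_eq, eta, Fintype.sum_prod_type, a1, a2, a3, a4,
    Finset.sum_sub_distrib]
  have b1 : ∀ (F : Z → Y → ℝ), ∑ z, ∑ y, F z y = ∑ y, ∑ z, F z y := fun F => Finset.sum_comm
  have b3 : ∀ (F : X → J → Z → ℝ), ∑ z, ∑ x, ∑ j, F x j z = ∑ x, ∑ j, ∑ z, F x j z := by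
    intro F
    rw [Finset.sum_comm]
    exact Finset.sum_congr rfl fun x _ => Finset.sum_comm
  have b2 : ∀ (F : X → J → Z → Y → ℝ), ∑ x, ∑ j, ∑ z, ∑ y, F x j z y
      = ∑ y, ∑ x, ∑ j, ∑ z, F x j z y := by
    intro F
    rw [Finset.sum_comm (s := (Finset.univ : Finset Y))]
    refine Finset.sum_congr rfl fun c _ => ?_
    rw [Finset.sum_comm (s := (Finset.univ : Finset Y))]
    refine Finset.sum_congr rfl fun c _ => Finset.sum_comm
  rw [b3 (fun x j z => ∑ y, Real.negMulLog (Q (x, j, z, y))),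
    b3 (fun x j z => Real.negMulLog (∑ y, (Q (x, j, z, y)))),
    b2 (fun x j z y => Real.negMulLog (Q (x, j, z, y))),
    b1 (fun z y => Real.negMulLog (∑ x, ∑ j, Q (x, j, z, y)))]
  ring

/-- Testing against conditional independence: with `Y = (J, Z, Ŷ)`,
if `I_Q(Ŷ;(X,J)|Z) = 0`, `P_XJZ = Q_XJZ` and `P_ŶZ = Q_ŶZ`, then
`E_{P_XY,Q_XY}(R) ≤ sup I_P(Ŷ;(U,J)|Z)` over channels with `I_P(U;X|(Z,J)) ≤ R`. -/
theorem errExp_test_against_cond_independence {X J Z Yh : Type*}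
    [Fintype X] [Fintype J] [Fintype Z] [Fintype Yh]
    (P Q : X × J × Z × Yh → ℝ) (hP : IsPMF P) (hQ : IsPMF Q)
    (hCI : condMI Q (fun w => w.2.2.2) (fun w => (w.1, w.2.1)) (fun w => w.2.2.1) = 0)
    (hXJZ : pushf P (fun w => (w.1, w.2.1, w.2.2.1)) = pushf Q (fun w => (w.1, w.2.1, w.2.2.1)))
    (hYhZ : pushf P (fun w => (w.2.2.2, w.2.2.1)) = pushf Q (fun w => (w.2.2.2, w.2.2.1)))
    (hfin : klDiv P Q < ⊤) :
    ∀ R : ℝ, 0 < R →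
      errExp P Q R
        ≤ sSup {v : EReal | ∃ (m : ℕ) (ch : X → Fin m → ℝ),
            (∀ x, IsPMF (ch x)) ∧
            condMI (fun w : Fin m × X × J × Z × Yh => ch w.2.1 w.1 * P w.2)
              (fun w => w.1) (fun w => w.2.1) (fun w => (w.2.2.2.1, w.2.2.1)) ≤ R ∧
            v = ((condMI (fun w : Fin m × X × J × Z × Yh => ch w.2.1 w.1 * P w.2)
              (fun w => w.2.2.2.2) (fun w => (w.1, w.2.2.1))
              (fun w => w.2.2.2.1) : ℝ) : EReal)} := by
  intro R hR
  classical
  set p : X → J × Z → Yh → ℝ := fun x c y => P (x, c.1, c.2, y) with hpdef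
  have hp : ∀ x c y, 0 ≤ p x c y := fun x c y => hP.1 _
  have hp1 : ∑ x, ∑ c, ∑ y, p x c y = 1 := by
    rw [← hP.2]; simp only [Fintype.sum_prod_type, hpdef]
  have m1 : ∀ (q : X × J × Z × Yh → ℝ) x j z, pushf q (fun w => (w.1, w.2.1, w.2.2.1)) (x, j, z)
      = ∑ y, q (x, j, z, y) := by
    intro q x j z
    rw [pushf_eq _ _ (fun a (b : Yh) => (a.1, a.2.1, a.2.2, b))
      (fun w => w.2.2.2) (fun _ _ => rfl) (fun _ _ => rfl) (fun _ => rfl)]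
  have m2 : ∀ (q : X × J × Z × Yh → ℝ) y z, pushf q (fun w => (w.2.2.2, w.2.2.1)) (y, z)
      = ∑ x, ∑ j, q (x, j, z, y) := by
    intro q y z
    rw [pushf_eq _ _ (fun a (b : X × J) => (b.1, b.2, a.2, a.1))
      (fun w => (w.1, w.2.1)) (fun _ _ => rfl) (fun _ _ => rfl) (fun _ => rfl)]
    rw [Fintype.sum_prod_type]
  have n1 : ∀ x j z, ∑ y, Q (x, j, z, y) = ∑ y, P (x, j, z, y) := by
    intro x j z; rw [← m1, ← m1, hXJZ]
  have n2 : ∀ y z, ∑ x, ∑ j, Q (x, j, z, y) = ∑ x, ∑ j, P (x, j, z, y) := by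
    intro y z; rw [← m2, ← m2, hYhZ]
  set T : Z → Yh → ℝ := fun z y => ∑ x, ∑ j, P (x, j, z, y) with hT
  set r : J × Z → Yh → ℝ := fun c y => T c.2 y / ∑ y', T c.2 y' with hr
  have hQf : ∀ x (c : J × Z) y, Q (x, c.1, c.2, y) = (∑ y', P (x, c.1, c.2, y')) * r c y := by
    intro x c y
    rw [ci_factor Q hQ hCI, n1]
    simp only [n2, hr, hT]
  have hT0 : ∀ z y, 0 ≤ T z y := fun z y =>
    Finset.sum_nonneg fun _ _ => Finset.sum_nonneg fun _ _ => hP.1 _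
  have hTN : ∀ z y, T z y ≤ ∑ y', T z y' := fun z y =>
    Finset.single_le_sum (f := fun y => T z y) (fun b _ => hT0 z b) (Finset.mem_univ y)
  have hrp : ∀ x (c : J × Z) y, P (x, c.1, c.2, y) ≠ 0 → 0 < r c y := by
    intro x c y h
    have h0 : 0 < P (x, c.1, c.2, y) := lt_of_le_of_ne (hP.1 _) (Ne.symm h)
    have h1 : P (x, c.1, c.2, y) ≤ T c.2 y :=
      (Finset.single_le_sum (f := fun j => P (x, j, c.2, y)) (fun b _ => hP.1 _)
        (Finset.mem_univ c.1)).trans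
      (Finset.single_le_sum (f := fun x => ∑ j, P (x, j, c.2, y))
        (fun b _ => Finset.sum_nonneg fun _ _ => hP.1 _) (Finset.mem_univ x))
    exact div_pos (h0.trans_le h1) ((h0.trans_le h1).trans_le (hTN _ _))
  have hL : ∑ x, ∑ c : J × Z, ∑ y, P (x, c.1, c.2, y) * Real.log (r c y)
      = - ∑ z, eta (fun y => T z y) := by
    simp only [Fintype.sum_prod_type]
    have sw : ∀ F : X → J → Z → Yh → ℝ, ∑ x, ∑ j, ∑ z, ∑ y, F x j z y
        = ∑ z, ∑ y, ∑ x, ∑ j, F x j z y := by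
      intro F
      have e1 : ∀ x, ∑ j, ∑ z, ∑ y, F x j z y = ∑ z, ∑ y, ∑ j, F x j z y := by
        intro x
        rw [Finset.sum_comm]
        exact Finset.sum_congr rfl fun z _ => Finset.sum_comm
      simp only [e1]
      rw [Finset.sum_comm]
      exact Finset.sum_congr rfl fun z _ => Finset.sum_comm
    rw [sw, ← Finset.sum_neg_distrib]
    refine Finset.sum_congr rfl fun z _ => ?_
    rw [eta_eq, ← Finset.sum_neg_distrib]
    refine Finset.sum_congr rfl fun y _ => ?_
    simp only [hr, ← Finset.sum_mul]
    change T z y * Real.log (T z y / ∑ y', T z y') = _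
    by_cases h : T z y = 0
    · simp [h]
    have h0 : 0 < T z y := lt_of_le_of_ne (hT0 z y) (Ne.symm h)
    rw [Real.log_div h ((h0.trans_le (hTN z y)).ne'), Real.negMulLog]
    ring
  refine sSup_le ?_
  rintro v ⟨n, hn, κ, hκ, rfl⟩
  rw [kl_eq P Q hP r hrp hQf n _ κ hκ, hL]
  generalize hK : 2 ^ ⌊(n : ℝ) * R⌋₊ = K at κ hκ ⊢
  have hnR : (0 : ℝ) < n := by exact_mod_cast hn
  obtain ⟨U, _, c, hc0, hc1, hch, hcg⟩ := single_letter p hp hp1 n (ULift (Fin K))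
    (fun m x => κ x m.down) (fun m x => (hκ x).1 _) (by
      intro x
      rw [← Equiv.ulift.symm.sum_comp]
      exact (hκ x).2)
  have hs1 := sum_sN (fun x c => ∑ y, p x c y) hp1 n
  have hrate := hfun_rate (sN (fun x c => ∑ y, p x c y) n)
    (fun x c => Finset.prod_nonneg fun i _ => Finset.sum_nonneg fun _ _ => hp _ _ _) hs1
    (fun m x => κ x m) (fun m x => (hκ x).1 m) (fun x => (hκ x).2)
  rw [hfun_one _ hp1, Fintype.card_fin] at hrate
  rw [← Equiv.ulift.symm.sum_comp] at hch
  rw [← Equiv.ulift.symm.sum_comp (fun m : ULift (Fin K) => gfun _ _)] at hcg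
  simp only [Equiv.ulift_symm_down] at hch hcg
  set e := Fintype.equivFin U with he
  have hcs : ∀ x, ∑ u, (n : ℝ)⁻¹ * c (e.symm u) x = 1 := by
    intro x
    rw [e.symm.sum_comp (fun u => (n : ℝ)⁻¹ * c u x), ← Finset.mul_sum, hc1,
      inv_mul_cancel₀ hnR.ne']
  refine le_sSup_of_le ⟨Fintype.card U, fun x u => (n : ℝ)⁻¹ * c (e.symm u) x, ?_, ?_, rfl⟩ ?_
  · intro x
    exact ⟨fun u => mul_nonneg (inv_nonneg.2 hnR.le) (hc0 _ _), hcs x⟩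
  · rw [condMI_rate P _ _ hcs]
    simp only [hfun_smul]
    rw [e.symm.sum_comp (fun u => (n : ℝ)⁻¹ * hfun _ (c u)), ← Finset.mul_sum]
    rw [← hch] at hrate
    have hlog : Real.log (K : ℕ) ≤ n * R := by
      rw [← hK]; push_cast
      rw [Real.log_pow]
      have h1 : (⌊(n : ℝ) * R⌋₊ : ℝ) ≤ n * R := Nat.floor_le (by positivity)
      have h2 : Real.log 2 ≤ 1 := by linarith [Real.log_two_lt_d9]
      have h3 : (0 : ℝ) ≤ (⌊(n : ℝ) * R⌋₊ : ℝ) := Nat.cast_nonneg _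
      nlinarith
    have h4 := mul_le_mul_of_nonneg_left (hrate.trans hlog) (inv_nonneg.2 hnR.le)
    rw [mul_sub, inv_mul_cancel_left₀ hnR.ne', inv_mul_cancel_left₀ hnR.ne'] at h4
    exact h4
  · rw [condMI_gain P _ _ hcs, ← EReal.coe_mul, EReal.coe_le_coe_iff]
    simp only [gfun_smul]
    rw [e.symm.sum_comp (fun u => (n : ℝ)⁻¹ * gfun _ (c u)), ← Finset.mul_sum]
    have h4 := mul_le_mul_of_nonneg_left hcg (inv_nonneg.2 hnR.le)
    rw [mul_sub, mul_neg, mul_neg, mul_neg, inv_mul_cancel_left₀ hnR.ne']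
    change _ ≤ ∑ z, eta (fun y => T z y) - (n : ℝ)⁻¹ * ∑ u, gfun p (c u)
    change -((n : ℝ)⁻¹ * ∑ m, gfun (pN p n) (fun x => κ x m)) - _ ≤ _
    linarith

end
end
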